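/- arXiv:2005.08584 — 5 statements merged into one kernel-verified Lean document; each statement's English description precedes it below -/
import Mathlib

section
/- For every positive power function P and every matching μ₀ : M ≃ W, the probability (with respect to (X,Y) uniform on ([0,1]^{M×W})²) that μ₀ is a stable matching which is women-optimal for the induced preference profile equals the probability that μ₀ is a stable matching which is men-optimal. (Hence the output distributions of the women-proposing and men-proposing deferred acceptance procedures are identical under any symmetric power preference distribution.) -/
open MeasureTheory

/-- `w₁ ≻ₘ w₂` in the preference profile induced by the matrix `X` and the power function `P`. -/
def PrefM {N : ℕ} (P X : Fin N × Fin N → ℝ) (m w₁ w₂ : Fin N) : Prop :=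
  X (m, w₁) ^ P (m, w₁) < X (m, w₂) ^ P (m, w₂)

/-- `m₁ ≻_w m₂` in the preference profile induced by the matrix `Y` and the power function `P`. -/
def PrefW {N : ℕ} (P Y : Fin N × Fin N → ℝ) (w m₁ m₂ : Fin N) : Prop :=
  Y (m₁, w) ^ P (m₁, w) < Y (m₂, w) ^ P (m₂, w)

/-- The matching `μ` is stable for the preference profile induced by `XY = (X, Y)`:
no pair `(m, w)` with `w ≻ₘ μ m` and `m ≻_w μ⁻¹ w`. -/
def IsStable {N : ℕ} (P : Fin N × Fin N → ℝ)
    (XY : (Fin N × Fin N → ℝ) × (Fin N × Fin N → ℝ)) (μ : Fin N ≃ Fin N) : Prop :=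
  ¬ ∃ m w, PrefM P XY.1 m w (μ m) ∧ PrefW P XY.2 w m (μ.symm w)

/-- `μ` is a stable matching which is women-optimal: every woman weakly prefers her
partner in `μ` to her partner in any other stable matching. -/
def IsWomenOptimal {N : ℕ} (P : Fin N × Fin N → ℝ)
    (XY : (Fin N × Fin N → ℝ) × (Fin N × Fin N → ℝ)) (μ : Fin N ≃ Fin N) : Prop :=
  IsStable P XY μ ∧
    ∀ μ' : Fin N ≃ Fin N, IsStable P XY μ' →
      ∀ w, μ.symm w = μ'.symm w ∨ PrefW P XY.2 w (μ.symm w) (μ'.symm w)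

/-- `μ` is a stable matching which is men-optimal. -/
def IsMenOptimal {N : ℕ} (P : Fin N × Fin N → ℝ)
    (XY : (Fin N × Fin N → ℝ) × (Fin N × Fin N → ℝ)) (μ : Fin N ≃ Fin N) : Prop :=
  IsStable P XY μ ∧
    ∀ μ' : Fin N ≃ Fin N, IsStable P XY μ' →
      ∀ m, μ m = μ' m ∨ PrefM P XY.1 m (μ m) (μ' m)

/-- The uniform probability measure on `([0,1]^{M×W})²`. -/
noncomputable def unifBox (N : ℕ) :
    Measure ((Fin N × Fin N → ℝ) × (Fin N × Fin N → ℝ)) :=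
  (Measure.pi fun _ : Fin N × Fin N => volume.restrict (Set.Icc (0:ℝ) 1)).prod
    (Measure.pi fun _ : Fin N × Fin N => volume.restrict (Set.Icc (0:ℝ) 1))

/-!
Relabel the women so that the given matching becomes the identity. If the identity is stable, then
it fails to be men-optimal exactly when some rotation is exposed in it, and inclusion–exclusion over
the exposed rotations (the expansion of a determinant) writes the probability of men-optimality as a
signed sum, over permutations `σ`, of the probability that the identity is stable and the nontrivial
cycles of `σ` are exposed rotations.

The summand for `σ` equals the summand for `σ⁻¹` with the roles of men and women exchanged. Indeed,
give every participant the larger of the two values that they assign to their partners under the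
identity and under `σ⁻¹`, for both partners. The event of the summand is then that the identity is
stable for these merged values, a condition that does not distinguish the identity from `σ⁻¹`, and
that of those moved by `σ⁻¹` every man prefers `σ⁻¹` and every woman prefers the identity. Given the
merged values, a participant prefers either of the two partners with odds equal to a quotient of
exponents, because the values are powers of uniform variables. As the same pairs `(σ w, w)` occur on
both sides of the market, these odds cancel in the product over all participants.
-/

section Combinatorics

open Equiv.Perm

variable {n α : Type*} [LinearOrder α]

/-- The matching `μ` of proposers with receivers, both labelled by `n`, is stable when proposer `m`
ranks receiver `w` by `U m w` and receiver `w` ranks proposer `m` by `V w m`, smaller values being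
preferred. -/
def NoBlockingPair (U V : n → n → α) (μ : Equiv.Perm n) : Prop :=
  ∀ m w, ¬(U m w < U m (μ m) ∧ V w m < V w (μ.symm w))

/-- The identity matching is stable and proposer-optimal. Relabelling the receivers brings an
arbitrary matching to this form. -/
def IdIsProposerOptimal (U V : n → n → α) : Prop :=
  NoBlockingPair U V 1 ∧
    ∀ μ : Equiv.Perm n, NoBlockingPair U V μ → ∀ m, m = μ m ∨ U m m < U m (μ m)

/-- Relative to the identity matching, `m` is the proposer that `w` likes best among the proposers
that prefer `w` to their partner. -/
def IsBestSuitor (U V : n → n → α) (w m : n) : Prop :=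
  U m w < U m m ∧ ∀ k, k ≠ m → U k w < U k k → V w m < V w k

/-- Every receiver moved by `σ` is sent to her best suitor, so that `σ` is a disjoint union of
rotations of the identity matching. The empty union `σ = 1` is allowed. -/
def IsRotationUnion (U V : n → n → α) (σ : Equiv.Perm n) : Prop :=
  ∀ w, σ w ≠ w → IsBestSuitor U V w (σ w)

variable {U V : n → n → α} {σ μ : Equiv.Perm n} {m w : n}

lemma noBlockingPair_comm : NoBlockingPair V U μ ↔ NoBlockingPair U V μ.symm :=
  ⟨fun h m w hb => h w m hb.symm, fun h w m hb => h m w hb.symm⟩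

lemma NoBlockingPair.le_of_lt (h : NoBlockingPair U V 1) (hU : U m w < U m m) :
    V w w ≤ V w m :=
  not_lt.1 fun hV => h m w ⟨hU, hV⟩

lemma IsBestSuitor.ne (h : IsBestSuitor U V w m) : m ≠ w := by
  rintro rfl
  exact h.1.false

lemma IsBestSuitor.unique {m' : n} (h : IsBestSuitor U V w m) (h' : IsBestSuitor U V w m') :
    m = m' := by
  by_contra hne
  exact lt_asymm (h.2 m' (Ne.symm hne) h'.1) (h'.2 m hne h.1)

lemma exists_isBestSuitor [Finite n] (hV : Function.Injective (V w)) (hm : U m w < U m m) :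
    ∃ m', IsBestSuitor U V w m' ∧ V w m' ≤ V w m := by
  obtain ⟨m', hm', hmin⟩ :=
    Set.exists_min_image {m | U m w < U m m} (V w) (Set.toFinite _) ⟨m, hm⟩
  exact ⟨m', ⟨hm', fun k hk hkw => (hmin k hkw).lt_of_ne (hV.ne hk.symm)⟩, hmin m hm⟩

lemma IsRotationUnion.lt (hσ : IsRotationUnion U V σ) (hm : m ≠ σ⁻¹ m) :
    U m (σ⁻¹ m) < U m m := by
  simpa using (hσ (σ⁻¹ m) (by simpa using hm)).1

lemma IsRotationUnion.le (hσ : IsRotationUnion U V σ) (m : n) : U m (σ⁻¹ m) ≤ U m m := by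
  by_cases hm : m = σ⁻¹ m
  · rw [← hm]
  · exact (hσ.lt hm).le

lemma IsRotationUnion.lt_receiver (hσ : IsRotationUnion U V σ) (h₁ : NoBlockingPair U V 1)
    (hV : ∀ w, Function.Injective (V w)) (hw : σ w ≠ w) : V w w < V w (σ w) :=
  (h₁.le_of_lt (hσ w hw).1).lt_of_ne ((hV w).ne hw.symm)

lemma IsRotationUnion.noBlockingPair_inv (hσ : IsRotationUnion U V σ)
    (hst : NoBlockingPair U V 1) : NoBlockingPair U V σ⁻¹ := by
  rintro m w ⟨hU, hV⟩
  have hU' : U m w < U m m := hU.trans_le (hσ.le m)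
  by_cases hw : σ w = w
  · exact hst m w ⟨hU', hV.trans_eq (congrArg (V w) hw)⟩
  · have hne : m ≠ σ w := fun h => hV.ne (congrArg (V w) h)
    exact lt_asymm hV ((hσ w hw).2 m hne hU')

lemma IdIsProposerOptimal.eq_one_of_isRotationUnion (h : IdIsProposerOptimal U V)
    (hσ : IsRotationUnion U V σ) : σ = 1 := by
  ext m
  by_contra hm
  have hm' : m ≠ σ⁻¹ m := fun h => hm (eq_inv_iff_eq.1 h)
  exact (h.2 _ (hσ.noBlockingPair_inv h.1) m).elim hm' (lt_asymm (hσ.lt hm'))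

lemma NoBlockingPair.mapsTo_improved (h₁ : NoBlockingPair U V 1) (hμ : NoBlockingPair U V μ)
    (hU : ∀ m, Function.Injective (U m)) (hV : ∀ w, Function.Injective (V w)) :
    Set.MapsTo μ {m | U m (μ m) < U m m} {m | U m (μ m) < U m m} := by
  intro m (hm : U m (μ m) < U m m)
  have hne : μ m ≠ m := fun h => by simp [h] at hm
  have hVlt : V (μ m) (μ m) < V (μ m) m := (h₁.le_of_lt hm).lt_of_ne ((hV _).ne hne)
  have hUle : U (μ m) (μ (μ m)) ≤ U (μ m) (μ m) :=
    not_lt.1 fun h => hμ (μ m) (μ m) ⟨h, by simpa using hVlt⟩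
  exact hUle.lt_of_ne ((hU _).ne (μ.injective.ne hne))

lemma NoBlockingPair.exists_isBestSuitor_of_improved [Finite n] (h₁ : NoBlockingPair U V 1)
    (hμ : NoBlockingPair U V μ) (hU : ∀ m, Function.Injective (U m))
    (hV : ∀ w, Function.Injective (V w)) (hw : U w (μ w) < U w w) :
    ∃ m, IsBestSuitor U V w m ∧ U m (μ m) < U m m := by
  have hsuitor : U (μ⁻¹ w) w < U (μ⁻¹ w) (μ⁻¹ w) := by
    simpa using perm_symm_mapsTo_of_mapsTo μ (h₁.mapsTo_improved hμ hU hV) hw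
  obtain ⟨m, hm, hle⟩ := exists_isBestSuitor (hV w) hsuitor
  refine ⟨m, hm, ?_⟩
  rcases eq_or_ne m (μ⁻¹ w) with rfl | hne
  · simpa using hsuitor
  · by_contra! hge
    exact hμ m w ⟨hm.1.trans_le hge, hle.lt_of_ne ((hV w).ne hne)⟩

variable [Fintype n] [DecidableEq n]

open Classical in
/-- The matrix `1 - A`, where `A` is the adjacency matrix of the partial function sending a
receiver to her best suitor. -/
noncomputable def suitorMatrix (U V : n → n → α) : Matrix n n ℝ :=
  1 - .of fun m w => if IsBestSuitor U V w m then 1 else 0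

lemma neg_one_pow_card_cycleType (σ : Equiv.Perm n) :
    (-1 : ℝ) ^ σ.cycleType.card = (sign σ : ℤ) * ∏ w, if σ w = w then 1 else -1 := by
  have hprod : ∏ w, (if σ w = w then (1 : ℝ) else -1) = (-1) ^ σ.support.card := by
    rw [Finset.prod_ite, Finset.prod_const_one, one_mul, Finset.prod_const]
    rfl
  rw [hprod, sign_of_cycleType, sum_cycleType]
  push_cast
  rw [← pow_add, add_right_comm, pow_add _ (_ + _), Even.neg_one_pow ⟨_, rfl⟩, one_mul]

open Classical in
lemma prod_suitorMatrix (U V : n → n → α) (σ : Equiv.Perm n) :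
    ∏ w, suitorMatrix U V (σ w) w =
      if IsRotationUnion U V σ then ∏ w, (if σ w = w then 1 else -1) else 0 := by
  split_ifs with hσ
  · refine Finset.prod_congr rfl fun w _ => ?_
    by_cases hw : σ w = w
    · have hself : ¬IsBestSuitor U V w w := fun h => h.ne rfl
      simp [suitorMatrix, hw, hself]
    · simp [suitorMatrix, hw, hσ w hw]
  · simp only [IsRotationUnion, not_forall] at hσ
    obtain ⟨w, hw, hns⟩ := hσ
    exact Finset.prod_eq_zero (Finset.mem_univ w) (by simp [suitorMatrix, hw, hns])

open Classical in
lemma sum_isRotationUnion_eq_det (U V : n → n → α) :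
    ∑ σ : Equiv.Perm n, (-1 : ℝ) ^ σ.cycleType.card * (if IsRotationUnion U V σ then 1 else 0) =
      (suitorMatrix U V).det := by
  rw [Matrix.det_apply']
  refine Finset.sum_congr rfl fun σ _ => ?_
  rw [prod_suitorMatrix, neg_one_pow_card_cycleType]
  split_ifs <;> simp

lemma IdIsProposerOptimal.det_suitorMatrix (h : IdIsProposerOptimal U V) :
    (suitorMatrix U V).det = 1 := by
  classical
  rw [← sum_isRotationUnion_eq_det, Finset.sum_eq_single 1]
  · have h₁ : IsRotationUnion U V 1 := fun w hw => absurd rfl hw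
    simp [h₁]
  · intro σ _ hσ
    rw [if_neg fun hrot => hσ (h.eq_one_of_isRotationUnion hrot), mul_zero]
  · simp

lemma det_suitorMatrix_eq_zero {p : n → Prop} (hp : ∃ w, p w)
    (hclosed : ∀ w, p w → ∃ m, IsBestSuitor U V w m ∧ p m) : (suitorMatrix U V).det = 0 := by
  classical
  have htri : ∀ m, ¬p m → ∀ w, p w → suitorMatrix U V m w = 0 := by
    intro m hm w hw
    obtain ⟨m', hm', hpm'⟩ := hclosed w hw
    have hmw : m ≠ w := fun h => hm (h ▸ hw)
    have hns : ¬IsBestSuitor U V w m := fun h => hm (h.unique hm' ▸ hpm')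
    simp [suitorMatrix, hmw, hns]
  -- The nonzero entries of a column of this block are one `1` and one `-1`.
  have hblock : ((suitorMatrix U V).toSquareBlockProp p).det = 0 := by
    obtain ⟨w₀, hw₀⟩ := hp
    refine Matrix.exists_vecMul_eq_zero_iff.1 ⟨1, fun h => one_ne_zero (congrFun h ⟨w₀, hw₀⟩), ?_⟩
    ext ⟨w, hw⟩
    obtain ⟨m, hm, hpm⟩ := hclosed w hw
    have hbest : ∀ k : {k // p k}, IsBestSuitor U V w k ↔ k = ⟨m, hpm⟩ := fun k =>
      ⟨fun h => Subtype.ext (h.unique hm), fun h => h ▸ hm⟩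
    simp [Matrix.vecMul, dotProduct, Matrix.toSquareBlockProp_def, suitorMatrix, hbest,
      Matrix.one_apply, ← Subtype.ext_iff (a2 := (⟨w, hw⟩ : {k // p k}))]
  rw [Matrix.twoBlockTriangular_det _ p htri, hblock, zero_mul]

lemma det_suitorMatrix_of_not_idIsProposerOptimal (h₁ : NoBlockingPair U V 1)
    (hopt : ¬IdIsProposerOptimal U V) (hU : ∀ m, Function.Injective (U m))
    (hV : ∀ w, Function.Injective (V w)) : (suitorMatrix U V).det = 0 := by
  simp only [IdIsProposerOptimal, h₁, true_and, not_forall, not_or, not_lt] at hopt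
  obtain ⟨μ, hμ, m, hne, hle⟩ := hopt
  exact det_suitorMatrix_eq_zero ⟨m, hle.lt_of_ne ((hU m).ne (Ne.symm hne))⟩ fun w hw =>
    h₁.exists_isBestSuitor_of_improved hμ hU hV hw

open Classical in
/-- Inclusion–exclusion over the rotations of the identity matching. -/
lemma indicator_idIsProposerOptimal (hU : ∀ m, Function.Injective (U m))
    (hV : ∀ w, Function.Injective (V w)) :
    (if IdIsProposerOptimal U V then (1 : ℝ) else 0) =
      ∑ σ : Equiv.Perm n, (-1) ^ σ.cycleType.card *
        (if NoBlockingPair U V 1 ∧ IsRotationUnion U V σ then 1 else 0) := by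
  by_cases h₁ : NoBlockingPair U V 1
  · simp only [h₁, true_and]
    rw [sum_isRotationUnion_eq_det]
    split_ifs with hopt
    · exact hopt.det_suitorMatrix.symm
    · exact (det_suitorMatrix_of_not_idIsProposerOptimal h₁ hopt hU hV).symm
  · have hopt : ¬IdIsProposerOptimal U V := fun h => h₁ h.1
    simp [h₁, hopt]

end Combinatorics

section Merging

variable {n α : Type*} [LinearOrder α] [DecidableEq n]

/-- Replaces both the `i`-th and the `j`-th entry of `x` by the larger of the two. -/
def maxMerge (i j : n) (x : n → α) : n → α := fun k =>
  if k = i ∨ k = j then max (x i) (x j) else x k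

lemma maxMerge_left (i j : n) (x : n → α) : maxMerge i j x i = max (x i) (x j) :=
  if_pos (Or.inl rfl)

lemma maxMerge_right (i j : n) (x : n → α) : maxMerge i j x j = max (x i) (x j) :=
  if_pos (Or.inr rfl)

lemma maxMerge_of_ne {i j k : n} (hi : k ≠ i) (hj : k ≠ j) (x : n → α) :
    maxMerge i j x k = x k :=
  if_neg (not_or.2 ⟨hi, hj⟩)

lemma le_maxMerge (i j : n) (x : n → α) : x ≤ maxMerge i j x := by
  intro k
  unfold maxMerge
  split_ifs with hk
  · rcases hk with rfl | rfl
    · exact le_max_left _ _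
    · exact le_max_right _ _
  · exact le_rfl

lemma maxMerge_update_update {i j : n} (hij : i ≠ j) {a b : α} (hb : b < a) (z : n → α) :
    maxMerge i j (Function.update (Function.update z i a) j b) =
      Function.update (Function.update z i a) j a := by
  ext k
  by_cases hi : k = i <;> by_cases hj : k = j <;> simp_all [maxMerge, hb.le]

/-- The identity matching is stable after every participant has come to value their partners under
the identity and under `σ` (or `σ⁻¹`) like the worse of the two. -/
def MergedStable (U V : n → n → α) (σ : Equiv.Perm n) : Prop :=
  NoBlockingPair (fun m => maxMerge m (σ⁻¹ m) (U m)) (fun w => maxMerge (σ w) w (V w)) 1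

variable {U V : n → n → α} {σ : Equiv.Perm n}

lemma MergedStable.not_lt_max (h : MergedStable U V σ) {m w : n} (hmw : m ≠ w) (hmσ : m ≠ σ w) :
    ¬(U m w < max (U m m) (U m (σ⁻¹ m)) ∧ V w m < max (V w (σ w)) (V w w)) := by
  have hwσ : w ≠ σ⁻¹ m := fun e => hmσ (Equiv.Perm.eq_inv_iff_eq.1 e).symm
  rw [← maxMerge_left m, ← maxMerge_right (σ w), ← maxMerge_of_ne hmw.symm hwσ (U m),
    ← maxMerge_of_ne hmσ hmw (V w)]
  exact h m w

lemma MergedStable.noBlockingPair (h : MergedStable U V σ)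
    (hV : ∀ w, σ w ≠ w → V w w < V w (σ w)) : NoBlockingPair U V 1 := by
  rintro m w ⟨hUm, hVw⟩
  have hmw : m ≠ w := fun e => hVw.ne (congrArg (V w) e)
  have hmσ : m ≠ σ w := by
    rintro rfl
    exact lt_asymm hVw (hV w hmw)
  exact h.not_lt_max hmw hmσ ⟨lt_max_of_lt_left hUm, lt_max_of_lt_right hVw⟩

lemma MergedStable.isRotationUnion (h : MergedStable U V σ)
    (hU : ∀ m, m ≠ σ⁻¹ m → U m (σ⁻¹ m) < U m m) (hV : ∀ w, Function.Injective (V w)) :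
    IsRotationUnion U V σ := by
  refine fun w hw => ⟨?_, fun m hm hUm => ?_⟩
  · simpa using hU (σ w) (by simpa using hw)
  · have hmw : m ≠ w := fun e => hUm.ne (congrArg (U m) e.symm)
    refine ((hV w).ne hm.symm).lt_of_le (not_lt.1 fun hVm => ?_)
    exact h.not_lt_max hmw hm ⟨lt_max_of_lt_left hUm, lt_max_of_lt_left hVm⟩

lemma IsRotationUnion.mergedStable (hσ : IsRotationUnion U V σ) (h₁ : NoBlockingPair U V 1)
    (hV : ∀ w, Function.Injective (V w)) : MergedStable U V σ := by
  rintro m w ⟨hUm, hVw⟩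
  have hU' : U m w < U m m := calc
    U m w ≤ _ := le_maxMerge _ _ _ _
    _ < _ := hUm
    _ = max (U m m) (U m (σ⁻¹ m)) := maxMerge_left _ _ _
    _ = U m m := max_eq_left (hσ.le m)
  have hV' : V w m < max (V w (σ w)) (V w w) := calc
    V w m ≤ _ := le_maxMerge _ _ _ _
    _ < _ := hVw
    _ = max (V w (σ w)) (V w w) := maxMerge_right _ _ _
  by_cases hw : σ w = w
  · exact h₁ m w ⟨hU', by rwa [hw, max_self] at hV'⟩
  · rw [max_eq_left (hσ.lt_receiver h₁ hV hw).le] at hV'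
    exact lt_asymm hV' ((hσ w hw).2 m (fun e => hV'.ne (congrArg (V w) e)) hU')

/-- `MergedStable` treats the identity and `σ` alike, so that on the right only the first two
conditions determine which of their two partners the participants prefer. -/
lemma noBlockingPair_one_and_isRotationUnion_iff (hV : ∀ w, Function.Injective (V w)) :
    NoBlockingPair U V 1 ∧ IsRotationUnion U V σ ↔
      (∀ m, m ≠ σ⁻¹ m → U m (σ⁻¹ m) < U m m) ∧ (∀ w, σ w ≠ w → V w w < V w (σ w)) ∧
        MergedStable U V σ :=
  ⟨fun ⟨h₁, hσ⟩ => ⟨fun _ => hσ.lt, fun _ => hσ.lt_receiver h₁ hV, hσ.mergedStable h₁ hV⟩,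
    fun ⟨hU, hV', h⟩ => ⟨h.noBlockingPair hV', h.isRotationUnion hU hV⟩⟩

end Merging

section MergedLaw

open scoped ENNReal NNReal

variable {ι α : Type*} [MeasurableSpace α] [LinearOrder α]

lemma lintegral_nnreal_smul_measure {β : Type*} [MeasurableSpace β] (c : ℝ≥0) (μ : Measure β)
    {f : β → ℝ≥0∞} (hf : Measurable f) : ∫⁻ x, f x ∂(c • μ) = ∫⁻ x, c * f x ∂μ := by
  rw [lintegral_smul_measure, lintegral_const_mul _ hf]
  rfl

lemma pi_nnreal_smul {κ : Type*} {X : κ → Type*} [Fintype κ] [∀ r, MeasurableSpace (X r)]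
    (c : κ → ℝ≥0) (μ : ∀ r, Measure (X r)) [∀ r, SigmaFinite (μ r)] :
    Measure.pi (fun r => c r • μ r) = (∏ r, c r) • Measure.pi μ := by
  refine Measure.pi_eq fun s _ => ?_
  simp only [Measure.smul_apply, Measure.pi_pi, ENNReal.smul_def, smul_eq_mul,
    Finset.prod_mul_distrib, ENNReal.ofNNReal_finsetProd]

/-- The reversed hazard rates (density divided by distribution function) of the laws `ν i` are
proportional to `1 / c i`. -/
def ProportionalReversedHazard (c : ι → ℝ≥0) (ν : ι → Measure α) : Prop :=
  ∀ i j, c i • (ν i).withDensity (fun t => ν j (Set.Iio t)) =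
    c j • (ν j).withDensity (fun t => ν i (Set.Iio t))

variable [DecidableEq ι] [TopologicalSpace α] [BorelSpace α] [OrderClosedTopology α]
  [SecondCountableTopology α]

lemma measurable_maxMerge (i j : ι) : Measurable (maxMerge i j : (ι → α) → ι → α) := by
  refine measurable_pi_lambda _ fun k => ?_
  unfold maxMerge
  split_ifs
  · exact (measurable_pi_apply i).max (measurable_pi_apply j)
  · exact measurable_pi_apply k

lemma lmarginal_pair_indicator_maxMerge (ν : ι → Measure α) [∀ i, SigmaFinite (ν i)] {i j : ι}
    (hij : i ≠ j) {f : (ι → α) → ℝ≥0∞} (hf : Measurable f) (z : ι → α) :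
    (∫⋯∫⁻_{i, j}, {x | x j < x i}.indicator (f ∘ maxMerge i j) ∂ν) z =
      ∫⁻ a, f (Function.update (Function.update z i a) j a)
        ∂(ν i).withDensity fun t => ν j (Set.Iio t) := by
  have hIio : Measurable fun t => ν j (Set.Iio t) :=
    Monotone.measurable fun _ _ h => measure_mono (Set.Iio_subset_Iio h)
  have hmeas : Measurable ({x | x j < x i}.indicator (f ∘ maxMerge i j)) :=
    (hf.comp (measurable_maxMerge i j)).indicator
      (measurableSet_lt (measurable_pi_apply j) (measurable_pi_apply i))
  rw [lmarginal_insert _ hmeas (by simpa using hij), lmarginal_singleton,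
    lintegral_withDensity_eq_lintegral_mul _ hIio (by fun_prop)]
  refine lintegral_congr fun a => ?_
  have hinner : ∀ b, {x : ι → α | x j < x i}.indicator (f ∘ maxMerge i j)
        (Function.update (Function.update z i a) j b) =
      (Set.Iio a).indicator (fun _ => f (Function.update (Function.update z i a) j a)) b := by
    intro b
    by_cases hb : b < a <;> simp [Set.indicator, hb, hij, maxMerge_update_update hij]
  simp only [hinner, lintegral_indicator_const measurableSet_Iio, Pi.mul_apply, mul_comm]

lemma measurable_maxMerge_rows {κ : Type*} (i j : κ → ι) :
    Measurable fun (x : κ → ι → α) r => maxMerge (i r) (j r) (x r) :=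
  measurable_pi_lambda _ fun r => (measurable_maxMerge _ _).comp (measurable_pi_apply r)

/-- On the event that the entry `i` of an independent family with laws `ν` exceeds the entry `j`
(no condition if `i = j`), the law of the family with both entries replaced by the larger one. -/
noncomputable def mergedLaw [Fintype ι] (ν : ι → Measure α) (i j : ι) : Measure (ι → α) :=
  ((Measure.pi ν).restrict {x | i ≠ j → x j < x i}).map (maxMerge i j)

lemma lintegral_mergedLaw [Fintype ι] (ν : ι → Measure α) {i j : ι} (hij : i ≠ j)
    {f : (ι → α) → ℝ≥0∞} (hf : Measurable f) :
    ∫⁻ x, f x ∂mergedLaw ν i j =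
      ∫⁻ x, {x | x j < x i}.indicator (f ∘ maxMerge i j) x ∂Measure.pi ν := by
  rw [mergedLaw, lintegral_map hf (measurable_maxMerge i j), lintegral_indicator
    (measurableSet_lt (measurable_pi_apply j) (measurable_pi_apply i))]
  simp only [ne_eq, hij, not_false_eq_true, true_imp_iff, Function.comp_apply]

/-- Both sides draw the common value of the two entries from the same measure. -/
lemma ProportionalReversedHazard.smul_mergedLaw [Fintype ι] {c : ι → ℝ≥0} {ν : ι → Measure α}
    [∀ i, SigmaFinite (ν i)] (h : ProportionalReversedHazard c ν) (i j : ι) :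
    c i • mergedLaw ν i j = c j • mergedLaw ν j i := by
  rcases eq_or_ne i j with rfl | hij
  · rfl
  refine Measure.ext_of_lintegral _ fun f hf => ?_
  have hmeas : ∀ k l, Measurable ({x : ι → α | x l < x k}.indicator
      ((fun x => c k * f x) ∘ maxMerge k l)) := fun k l =>
    ((hf.const_mul _).comp (measurable_maxMerge k l)).indicator
      (measurableSet_lt (measurable_pi_apply l) (measurable_pi_apply k))
  rw [lintegral_nnreal_smul_measure _ _ hf, lintegral_nnreal_smul_measure _ _ hf,
    lintegral_mergedLaw ν hij (hf.const_mul _),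
    lintegral_mergedLaw ν hij.symm (hf.const_mul _)]
  refine lintegral_eq_of_lmarginal_eq {i, j} (hmeas i j) (hmeas j i) (funext fun z => ?_)
  rw [lmarginal_pair_indicator_maxMerge ν hij (hf.const_mul _), Finset.pair_comm,
    lmarginal_pair_indicator_maxMerge ν hij.symm (hf.const_mul _)]
  simp only [Function.update_comm hij.symm]
  rw [← lintegral_nnreal_smul_measure _ _ (by fun_prop), h i j,
    lintegral_nnreal_smul_measure _ _ (by fun_prop)]

instance isFiniteMeasure_mergedLaw [Fintype ι] (ν : ι → Measure α) [∀ i, IsFiniteMeasure (ν i)]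
    (i j : ι) : IsFiniteMeasure (mergedLaw ν i j) := by
  unfold mergedLaw
  infer_instance

variable {κ : Type*} [Fintype κ] [Fintype ι]

lemma prod_smul_pi_mergedLaw {c : κ → ι → ℝ≥0} {ν : κ → ι → Measure α}
    [∀ r k, IsFiniteMeasure (ν r k)] (h : ∀ r, ProportionalReversedHazard (c r) (ν r))
    (i j : κ → ι) :
    (∏ r, c r (i r)) • Measure.pi (fun r => mergedLaw (ν r) (i r) (j r)) =
      (∏ r, c r (j r)) • Measure.pi (fun r => mergedLaw (ν r) (j r) (i r)) := by
  rw [← pi_nnreal_smul, ← pi_nnreal_smul]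
  exact congrArg Measure.pi (funext fun r => (h r).smul_mergedLaw (i r) (j r))

lemma pi_mergedLaw (ν : κ → ι → Measure α) [∀ r k, IsFiniteMeasure (ν r k)] (i j : κ → ι) :
    Measure.pi (fun r => mergedLaw (ν r) (i r) (j r)) =
      ((Measure.pi fun r => Measure.pi (ν r)).restrict
        {x | ∀ r, i r ≠ j r → x r (j r) < x r (i r)}).map
        fun x r => maxMerge (i r) (j r) (x r) := by
  have hset : {x : κ → ι → α | ∀ r, i r ≠ j r → x r (j r) < x r (i r)} =
      Set.univ.pi fun r => {x | i r ≠ j r → x (j r) < x (i r)} := by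
    ext x
    simp only [Set.mem_ofPred_eq, Set.mem_univ_pi]
  rw [hset, Measure.restrict_pi_pi]
  exact (Measure.pi_map_pi fun r => (measurable_maxMerge (i r) (j r)).aemeasurable).symm

end MergedLaw

section RandomMatrix

open scoped ENNReal NNReal

variable {ι κ α : Type*} [MeasurableSpace α] [Fintype ι] [Fintype κ]

lemma ae_injective_pi [MeasurableEq α] (ν : ι → Measure α) [∀ i, SigmaFinite (ν i)]
    [∀ i, NullSingletonClass (ν i)] : ∀ᵐ x ∂Measure.pi ν, Function.Injective x := by
  classical
  have hne : ∀ i j, i ≠ j → ∀ᵐ x ∂Measure.pi ν, x i ≠ x j := by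
    intro i j hij
    have hmeas : MeasurableSet {x : ι → α | x i = x j} :=
      measurableSet_eq_fun (measurable_pi_apply i) (measurable_pi_apply j)
    simp only [ae_iff, not_ne_iff]
    rw [← lintegral_indicator_one hmeas, ← lintegral_zero (μ := Measure.pi ν)]
    refine lintegral_eq_of_lmarginal_eq {i} (measurable_one.indicator hmeas) measurable_zero ?_
    have hline : ∀ (x : ι → α) (a : α),
        {x : ι → α | x i = x j}.indicator (1 : (ι → α) → ℝ≥0∞) (Function.update x i a) =
          ({x j} : Set α).indicator 1 a := by
      intro x a
      by_cases ha : a = x j <;> simp [Set.indicator, ha, hij.symm]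
    ext x
    simp only [lmarginal_singleton, hline, lintegral_indicator_one (measurableSet_singleton _),
      measure_singleton, lintegral_zero]
  have hall : ∀ᵐ x ∂Measure.pi ν, ∀ i j, i ≠ j → x i ≠ x j :=
    ae_all_iff.2 fun i => ae_all_iff.2 fun j => ae_all_iff.2 (hne i j)
  filter_upwards [hall] with x hx i j
  exact not_imp_not.1 (hx i j)

/-- The law of a matrix with independent entries, the entry `(r, k)` having law `ν r k`. -/
noncomputable def matrixLaw (ν : κ → ι → Measure α) : Measure (κ → ι → α) :=
  Measure.pi fun r => Measure.pi (ν r)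

instance isProbabilityMeasure_matrixLaw (ν : κ → ι → Measure α)
    [∀ r k, IsProbabilityMeasure (ν r k)] : IsProbabilityMeasure (matrixLaw ν) := by
  unfold matrixLaw
  infer_instance

lemma ae_injective_matrixLaw [MeasurableEq α] (ν : κ → ι → Measure α)
    [∀ r k, IsProbabilityMeasure (ν r k)] [∀ r k, NullSingletonClass (ν r k)] :
    ∀ᵐ x ∂matrixLaw ν, ∀ r, Function.Injective (x r) :=
  ae_all_iff.2 fun r => (Measure.tendsto_eval_ae_ae (i := r)).eventually (ae_injective_pi (ν r))

variable {n : Type*} [LinearOrder α] [TopologicalSpace α] [BorelSpace α]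
  [OrderClosedTopology α] [SecondCountableTopology α]

lemma measurableSet_noBlockingPair [Finite n] (μ : Equiv.Perm n) :
    MeasurableSet {z : (n → n → α) × (n → n → α) | NoBlockingPair z.1 z.2 μ} := by
  unfold NoBlockingPair
  measurability

lemma measurableSet_isRotationUnion [Finite n] (σ : Equiv.Perm n) :
    MeasurableSet {z : (n → n → α) × (n → n → α) | IsRotationUnion z.1 z.2 σ} := by
  unfold IsRotationUnion IsBestSuitor
  measurability

lemma measurableSet_idIsProposerOptimal [Finite n] :
    MeasurableSet {z : (n → n → α) × (n → n → α) | IdIsProposerOptimal z.1 z.2} := by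
  unfold IdIsProposerOptimal NoBlockingPair
  measurability

lemma measurableSet_noBlockingPair_one_and_isRotationUnion [Finite n] (σ : Equiv.Perm n) :
    MeasurableSet {z : (n → n → α) × (n → n → α) |
      NoBlockingPair z.1 z.2 1 ∧ IsRotationUnion z.1 z.2 σ} :=
  (measurableSet_noBlockingPair 1).inter (measurableSet_isRotationUnion σ)

lemma prod_apply_noBlockingPair_comm [Finite n] (μ ν : Measure (n → n → α)) [SFinite μ]
    [SFinite ν] :
    (μ.prod ν) {z | NoBlockingPair z.1 z.2 1} = (ν.prod μ) {z | NoBlockingPair z.1 z.2 1} := by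
  rw [← Measure.prod_swap, Measure.map_apply measurable_swap (measurableSet_noBlockingPair 1)]
  exact congrArg _ (Set.ext fun z => noBlockingPair_comm)

variable [Fintype n]

lemma measure_noBlockingPair_and_isRotationUnion [DecidableEq n] (ν ν' : n → n → Measure α)
    [∀ r k, IsProbabilityMeasure (ν r k)] [∀ r k, IsProbabilityMeasure (ν' r k)]
    [∀ r k, NullSingletonClass (ν' r k)] (σ : Equiv.Perm n) :
    ((matrixLaw ν).prod (matrixLaw ν'))
        {z | NoBlockingPair z.1 z.2 1 ∧ IsRotationUnion z.1 z.2 σ} =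
      ((Measure.pi fun m => mergedLaw (ν m) m (σ⁻¹ m)).prod
          (Measure.pi fun w => mergedLaw (ν' w) (σ w) w)) {z | NoBlockingPair z.1 z.2 1} := by
  have hinj : ∀ᵐ z ∂(matrixLaw ν).prod (matrixLaw ν'), ∀ w, Function.Injective (z.2 w) :=
    Measure.quasiMeasurePreserving_snd.ae (ae_injective_matrixLaw ν')
  have hm : Measurable (Prod.map (fun (x : n → n → α) m => maxMerge m (σ⁻¹ m) (x m))
      fun (x : n → n → α) w => maxMerge (σ w) w (x w)) :=
    (measurable_maxMerge_rows _ _).prodMap (measurable_maxMerge_rows _ _)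
  rw [pi_mergedLaw, pi_mergedLaw, Measure.map_prod_map _ _ (measurable_maxMerge_rows _ _)
    (measurable_maxMerge_rows _ _), Measure.prod_restrict,
    Measure.map_apply hm (measurableSet_noBlockingPair 1),
    Measure.restrict_apply (hm (measurableSet_noBlockingPair 1))]
  refine measure_congr (hinj.mono fun z hz => propext ?_)
  refine (noBlockingPair_one_and_isRotationUnion_iff hz).trans ?_
  rw [← and_assoc, and_comm]
  rfl

/-- The proportionality constants of the two factors cancel because the pairs `(m, σ⁻¹ m)` are the
pairs `(σ w, w)`. -/
lemma prod_pi_mergedLaw_swap [DecidableEq n] {c : n → n → ℝ≥0} {ν : n → n → Measure α}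
    [∀ i j, IsFiniteMeasure (ν i j)] (hc : ∀ i j, c i j ≠ 0)
    (hrow : ∀ i, ProportionalReversedHazard (c i) (ν i))
    (hcol : ∀ j, ProportionalReversedHazard (fun i => c i j) fun i => ν i j)
    (σ : Equiv.Perm n) :
    (Measure.pi fun m => mergedLaw (ν m) m (σ⁻¹ m)).prod
        (Measure.pi fun w => mergedLaw (fun i => ν i w) (σ w) w) =
      (Measure.pi fun m => mergedLaw (ν m) (σ⁻¹ m) m).prod
        (Measure.pi fun w => mergedLaw (fun i => ν i w) w (σ w)) := by
  have hσ : ∏ w, c (σ w) w = ∏ m, c m (σ⁻¹ m) := by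
    rw [← Equiv.prod_comp σ fun m => c m (σ⁻¹ m)]
    simp only [Equiv.Perm.coe_inv, Equiv.symm_apply_apply]
  have hunit : IsUnit ((∏ m, c m m) * ∏ m, c m (σ⁻¹ m)) :=
    (mul_ne_zero (Finset.prod_ne_zero_iff.2 fun m _ => hc _ _)
      (Finset.prod_ne_zero_iff.2 fun m _ => hc _ _)).isUnit
  have hA := prod_smul_pi_mergedLaw hrow (fun m => m) fun m => σ⁻¹ m
  have hB := prod_smul_pi_mergedLaw hcol (fun w => σ w) fun w => w
  rw [← hunit.smul_left_cancel, ← smul_smul, ← Measure.prod_smul_right, ← hσ, hB,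
    Measure.prod_smul_right, ← Measure.prod_smul_left, hA, Measure.prod_smul_left, smul_smul, hσ]

lemma measure_noBlockingPair_and_isRotationUnion_inv {c : n → n → ℝ≥0} {ν : n → n → Measure α}
    [∀ i j, IsProbabilityMeasure (ν i j)] [∀ i j, NullSingletonClass (ν i j)]
    (hc : ∀ i j, c i j ≠ 0) (hrow : ∀ i, ProportionalReversedHazard (c i) (ν i))
    (hcol : ∀ j, ProportionalReversedHazard (fun i => c i j) fun i => ν i j)
    (σ : Equiv.Perm n) :
    ((matrixLaw ν).prod (matrixLaw fun j i => ν i j))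
        {z | NoBlockingPair z.1 z.2 1 ∧ IsRotationUnion z.1 z.2 σ} =
      ((matrixLaw fun j i => ν i j).prod (matrixLaw ν))
        {z | NoBlockingPair z.1 z.2 1 ∧ IsRotationUnion z.1 z.2 σ⁻¹} := by
  classical
  rw [measure_noBlockingPair_and_isRotationUnion, measure_noBlockingPair_and_isRotationUnion,
    prod_pi_mergedLaw_swap hc hrow hcol, prod_apply_noBlockingPair_comm, inv_inv]

lemma measureReal_idIsProposerOptimal [DecidableEq n] (ν ν' : n → n → Measure α)
    [∀ i j, IsProbabilityMeasure (ν i j)] [∀ i j, NullSingletonClass (ν i j)]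
    [∀ i j, IsProbabilityMeasure (ν' i j)] [∀ i j, NullSingletonClass (ν' i j)] :
    ((matrixLaw ν).prod (matrixLaw ν')).real {z | IdIsProposerOptimal z.1 z.2} =
      ∑ σ : Equiv.Perm n, (-1) ^ σ.cycleType.card *
        ((matrixLaw ν).prod (matrixLaw ν')).real
          {z | NoBlockingPair z.1 z.2 1 ∧ IsRotationUnion z.1 z.2 σ} := by
  classical
  set ρ := (matrixLaw ν).prod (matrixLaw ν')
  have hU : ∀ᵐ z ∂ρ, ∀ m, Function.Injective (z.1 m) :=
    Measure.quasiMeasurePreserving_fst.ae (ae_injective_matrixLaw ν)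
  have hV : ∀ᵐ z ∂ρ, ∀ w, Function.Injective (z.2 w) :=
    Measure.quasiMeasurePreserving_snd.ae (ae_injective_matrixLaw ν')
  have hE := measurableSet_noBlockingPair_one_and_isRotationUnion (n := n) (α := α)
  rw [← integral_indicator_one measurableSet_idIsProposerOptimal]
  simp_rw [← integral_indicator_one (hE _), ← integral_const_mul]
  rw [← integral_finsetSum _ fun σ _ => ((integrable_const 1).indicator (hE σ)).const_mul _]
  refine integral_congr_ae ?_
  filter_upwards [hU, hV] with z hz₁ hz₂
  simpa only [Set.indicator, Set.mem_ofPred_eq, Pi.one_apply] using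
    indicator_idIsProposerOptimal hz₁ hz₂

theorem measure_idIsProposerOptimal_comm {c : n → n → ℝ≥0} {ν : n → n → Measure α}
    [∀ i j, IsProbabilityMeasure (ν i j)] [∀ i j, NullSingletonClass (ν i j)]
    (hc : ∀ i j, c i j ≠ 0) (hrow : ∀ i, ProportionalReversedHazard (c i) (ν i))
    (hcol : ∀ j, ProportionalReversedHazard (fun i => c i j) fun i => ν i j) :
    ((matrixLaw ν).prod (matrixLaw fun j i => ν i j)) {z | IdIsProposerOptimal z.1 z.2} =
      ((matrixLaw fun j i => ν i j).prod (matrixLaw ν)) {z | IdIsProposerOptimal z.1 z.2} := by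
  classical
  rw [← measureReal_eq_measureReal_iff, measureReal_idIsProposerOptimal,
    measureReal_idIsProposerOptimal, ← Equiv.sum_comp (Equiv.inv (Equiv.Perm n))]
  refine Finset.sum_congr rfl fun σ _ => ?_
  rw [Equiv.inv_apply, Equiv.Perm.cycleType_inv, measureReal_def, measureReal_def,
    measure_noBlockingPair_and_isRotationUnion_inv hc hrow hcol, inv_inv]

end RandomMatrix

section PowLaw

open scoped ENNReal NNReal

/-- The law of `X ^ p` for `X` uniformly distributed on `[0, 1]`. -/
noncomputable def powLaw (p : ℝ) : Measure ℝ :=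
  (volume.restrict (Set.Icc 0 1)).map fun x => x ^ p

instance isProbabilityMeasure_powLaw (p : ℝ) : IsProbabilityMeasure (powLaw p) := by
  have : IsProbabilityMeasure (volume.restrict (Set.Icc (0 : ℝ) 1)) := ⟨by simp⟩
  exact Measure.isProbabilityMeasure_map (by fun_prop)

variable {p q : ℝ}

lemma image_rpow_Ioc (hp : 0 < p) : (fun t : ℝ => t ^ p) '' Set.Ioc 0 1 = Set.Ioc 0 1 := by
  ext x
  constructor
  · rintro ⟨t, ht, rfl⟩
    exact ⟨Real.rpow_pos_of_pos ht.1 _, Real.rpow_le_one ht.1.le ht.2 hp.le⟩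
  · intro hx
    exact ⟨x ^ p⁻¹, ⟨Real.rpow_pos_of_pos hx.1 _, Real.rpow_le_one hx.1.le hx.2 (by positivity)⟩,
      Real.rpow_inv_rpow hx.1.le hp.ne'⟩

lemma powLaw_eq_withDensity (hp : 0 < p) :
    powLaw p = (volume.restrict (Set.Ioc 0 1)).withDensity
      fun t => ENNReal.ofReal (p⁻¹ * t ^ (p⁻¹ - 1)) := by
  refine Measure.ext_of_lintegral _ fun g hg => ?_
  have hp' : 0 < p⁻¹ := inv_pos.2 hp
  calc ∫⁻ t, g t ∂powLaw p
      = ∫⁻ x in (fun t : ℝ => t ^ p⁻¹) '' Set.Ioc 0 1, g (x ^ p) := by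
        rw [image_rpow_Ioc hp', powLaw, lintegral_map hg (by fun_prop),
          setLIntegral_congr Ioc_ae_eq_Icc]
    _ = ∫⁻ t in Set.Ioc 0 1, ENNReal.ofReal |p⁻¹ * t ^ (p⁻¹ - 1)| * g ((t ^ p⁻¹) ^ p) :=
        lintegral_image_eq_lintegral_abs_deriv_mul measurableSet_Ioc
          (fun t ht => (Real.hasDerivAt_rpow_const (Or.inl ht.1.ne')).hasDerivWithinAt)
          ((Real.rpow_left_injOn hp'.ne').mono fun t ht => ht.1.le) _
    _ = ∫⁻ t in Set.Ioc 0 1, ENNReal.ofReal (p⁻¹ * t ^ (p⁻¹ - 1)) * g t :=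
        setLIntegral_congr_fun measurableSet_Ioc fun t ht => by
          have ht₀ : 0 ≤ t := ht.1.le
          rw [abs_of_nonneg (by positivity), Real.rpow_inv_rpow ht₀ hp.ne']
    _ = _ := (lintegral_withDensity_eq_lintegral_mul _ (by fun_prop) hg).symm

lemma nullSingletonClass_powLaw (hp : 0 < p) : NullSingletonClass (powLaw p) := by
  rw [powLaw_eq_withDensity hp]
  infer_instance

lemma powLaw_Iio (hp : 0 < p) {t : ℝ} (ht : t ∈ Set.Ioc 0 1) :
    powLaw p (Set.Iio t) = ENNReal.ofReal (t ^ p⁻¹) := by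
  have hle : t ^ p⁻¹ ≤ 1 := Real.rpow_le_one ht.1.le ht.2 (by positivity)
  have hpre : (fun x : ℝ => x ^ p) ⁻¹' Set.Iio t ∩ Set.Icc 0 1 = Set.Ico 0 (t ^ p⁻¹) := by
    ext x
    constructor
    · exact fun ⟨hxt, hx⟩ => ⟨hx.1, (Real.lt_rpow_inv_iff_of_pos hx.1 ht.1.le hp).2 hxt⟩
    · exact fun hx => ⟨(Real.lt_rpow_inv_iff_of_pos hx.1 ht.1.le hp).1 hx.2,
        hx.1, hx.2.le.trans hle⟩
  rw [powLaw, Measure.map_apply (by fun_prop) measurableSet_Iio,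
    Measure.restrict_apply' measurableSet_Icc, hpre, Real.volume_Ico, sub_zero]

/-- The density of `powLaw p` is `p⁻¹ * t ^ (p⁻¹ - 1)` and the distribution function of `powLaw q`
is `t ^ q⁻¹`. -/
lemma smul_powLaw_withDensity (hp : 0 < p) (hq : 0 < q) :
    p.toNNReal • (powLaw p).withDensity (fun t => powLaw q (Set.Iio t)) =
      (volume.restrict (Set.Ioc 0 1)).withDensity
        fun t => ENNReal.ofReal (t ^ (p⁻¹ + q⁻¹ - 1)) := by
  have hIio : Measurable fun t => powLaw q (Set.Iio t) :=
    Monotone.measurable fun _ _ h => measure_mono (Set.Iio_subset_Iio h)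
  rw [ENNReal.smul_def, ENNReal.ofNNReal_toNNReal, powLaw_eq_withDensity hp,
    ← withDensity_mul _ (by fun_prop) hIio, ← withDensity_smul _ (.mul (by fun_prop) hIio)]
  refine withDensity_congr_ae (ae_restrict_of_forall_mem measurableSet_Ioc fun t ht => ?_)
  have ht₀ : 0 < t := ht.1
  simp only [Pi.smul_apply, Pi.mul_apply, smul_eq_mul, powLaw_Iio hq ht]
  rw [← ENNReal.ofReal_mul (by positivity), ← ENNReal.ofReal_mul hp.le, mul_assoc,
    mul_inv_cancel_left₀ hp.ne', ← Real.rpow_add ht₀, sub_add_eq_add_sub]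

lemma proportionalReversedHazard_powLaw {ι : Type*} {p : ι → ℝ} (hp : ∀ i, 0 < p i) :
    ProportionalReversedHazard (fun i => (p i).toNNReal) fun i => powLaw (p i) := by
  intro i j
  rw [smul_powLaw_withDensity (hp i) (hp j), smul_powLaw_withDensity (hp j) (hp i), add_comm]

end PowLaw

section Relabelling

lemma measurePreserving_matrix {ι κ γ α : Type*} [Fintype ι] [Fintype κ] [Fintype γ]
    [MeasurableSpace α] (e : κ × ι ≃ γ) (μ : γ → Measure α) [∀ i, IsProbabilityMeasure (μ i)] :
    MeasurePreserving (fun x r k => x (e (r, k))) (Measure.pi μ)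
      (matrixLaw fun r k => μ (e (r, k))) := by
  have hcurry : MeasurePreserving (MeasurableEquiv.curry κ ι α)
      (Measure.pi fun rk => μ (e rk)) (matrixLaw fun r k => μ (e (r, k))) := by
    refine ⟨MeasurableEquiv.measurable _, ?_⟩
    have h := Measure.infinitePi_map_curry fun r k => μ (e (r, k))
    simpa only [matrixLaw, Measure.infinitePi_eq_pi] using h
  exact hcurry.comp (measurePreserving_piCongrLeft μ e).symm

lemma measurePreserving_rpow_pi {ι : Type*} [Fintype ι] (p : ι → ℝ) :
    MeasurePreserving (fun x i => x i ^ p i)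
      (Measure.pi fun _ : ι => volume.restrict (Set.Icc (0 : ℝ) 1))
      (Measure.pi fun i => powLaw (p i)) :=
  measurePreserving_pi _ _ fun i =>
    (measurable_id.pow_const (p i)).measurePreserving (volume.restrict (Set.Icc (0 : ℝ) 1))

variable {N : ℕ} {P : Fin N × Fin N → ℝ} {μ₀ : Fin N ≃ Fin N}
  {XY : (Fin N × Fin N → ℝ) × (Fin N × Fin N → ℝ)}

/-- The values that induce the preferences, as one matrix for the men and one for the women with
rows indexed by the participants who hold the preferences. The woman `μ₀ w` is relabelled as `w`, so
that `μ₀` becomes the identity matching. -/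
noncomputable def relabelledValues (P : Fin N × Fin N → ℝ) (μ₀ : Fin N ≃ Fin N)
    (XY : (Fin N × Fin N → ℝ) × (Fin N × Fin N → ℝ)) :
    (Fin N → Fin N → ℝ) × (Fin N → Fin N → ℝ) :=
  (fun m w => XY.1 (m, μ₀ w) ^ P (m, μ₀ w), fun w m => XY.2 (m, μ₀ w) ^ P (m, μ₀ w))

lemma measurePreserving_relabelledValues (P : Fin N × Fin N → ℝ) (μ₀ : Fin N ≃ Fin N) :
    MeasurePreserving (relabelledValues P μ₀) (unifBox N)
      ((matrixLaw fun m w => powLaw (P (m, μ₀ w))).prod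
        (matrixLaw fun w m => powLaw (P (m, μ₀ w)))) :=
  ((measurePreserving_matrix ((Equiv.refl _).prodCongr μ₀) fun i => powLaw (P i)).comp
      (measurePreserving_rpow_pi P)).prod
    ((measurePreserving_matrix ((Equiv.prodComm _ _).trans ((Equiv.refl _).prodCongr μ₀))
      fun i => powLaw (P i)).comp (measurePreserving_rpow_pi P))

lemma isStable_trans_iff (μ : Equiv.Perm (Fin N)) :
    IsStable P XY (μ.trans μ₀) ↔
      NoBlockingPair (relabelledValues P μ₀ XY).1 (relabelledValues P μ₀ XY).2 μ := by
  simp only [IsStable, not_exists]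
  refine forall_congr' fun m => μ₀.forall_congr_right.symm.trans (forall_congr' fun w => ?_)
  simp [PrefM, PrefW, relabelledValues]

lemma isMenOptimal_iff : IsMenOptimal P XY μ₀ ↔
    IdIsProposerOptimal (relabelledValues P μ₀ XY).1 (relabelledValues P μ₀ XY).2 := by
  refine and_congr (isStable_trans_iff 1) ?_
  refine ((Equiv.refl _).equivCongr μ₀).forall_congr_right.symm.trans ?_
  refine forall_congr' fun μ => imp_congr (isStable_trans_iff μ) (forall_congr' fun m => ?_)
  exact or_congr_left μ₀.injective.eq_iff

lemma isWomenOptimal_iff : IsWomenOptimal P XY μ₀ ↔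
    IdIsProposerOptimal (relabelledValues P μ₀ XY).2 (relabelledValues P μ₀ XY).1 := by
  refine and_congr ((isStable_trans_iff 1).trans (noBlockingPair_comm (μ := 1))) ?_
  refine ((Equiv.refl _).equivCongr μ₀).forall_congr_right.symm.trans ?_
  refine (Equiv.inv _).forall_congr_right.symm.trans (forall_congr' fun μ => ?_)
  refine imp_congr ((isStable_trans_iff μ⁻¹).trans noBlockingPair_comm.symm) ?_
  refine μ₀.forall_congr_right.symm.trans (forall_congr' fun w => ?_)
  have hinv : Equiv.symm μ⁻¹ = μ := rfl
  simp [PrefW, relabelledValues, hinv]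

end Relabelling

/-- Under any symmetric power preference distribution, a fixed matching `μ₀` is as likely to
be the stable women-optimal matching as it is to be the stable men-optimal matching; hence the
output distributions of WPDA and MPDA are identical. -/
theorem wpda_eq_mpda (N : ℕ) (hN : 1 ≤ N) (P : Fin N × Fin N → ℝ)
    (hP : ∀ mw, 0 < P mw) (μ₀ : Fin N ≃ Fin N) :
    unifBox N {XY | IsWomenOptimal P XY μ₀} = unifBox N {XY | IsMenOptimal P XY μ₀} := by
  set ν : Fin N → Fin N → Measure ℝ := fun m w => powLaw (P (m, μ₀ w))
  have hnull (m w) : NullSingletonClass (ν m w) := nullSingletonClass_powLaw (hP _)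
  have hlaw : MeasurePreserving (relabelledValues P μ₀) (unifBox N)
      ((matrixLaw ν).prod (matrixLaw fun w m => ν m w)) := measurePreserving_relabelledValues P μ₀
  simp only [isWomenOptimal_iff, isMenOptimal_iff]
  calc
    _ = ((matrixLaw fun w m => ν m w).prod (matrixLaw ν)) {z | IdIsProposerOptimal z.1 z.2} :=
      (Measure.measurePreserving_swap.comp hlaw).measure_preimage
        measurableSet_idIsProposerOptimal.nullMeasurableSet
    _ = ((matrixLaw ν).prod (matrixLaw fun w m => ν m w)) {z | IdIsProposerOptimal z.1 z.2} :=
      (measure_idIsProposerOptimal_comm (c := fun m w => (P (m, μ₀ w)).toNNReal)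
        (fun m w => (Real.toNNReal_pos.2 (hP _)).ne')
        (fun m => proportionalReversedHazard_powLaw fun w => hP _)
        (fun w => proportionalReversedHazard_powLaw fun m => hP _)).symm
    _ = _ := (hlaw.measure_preimage measurableSet_idIsProposerOptimal.nullMeasurableSet).symm
end

section
/- Under the symmetric power preference distribution with positive power function P, for every permutation σ of M ⊔ W, the probability that σ is a stable permutation equals the iterated integral over x ∈ [0,1]^M and y ∈ [0,1]^W of the product of: x_m^{P(m,σ⁻¹(m))/P(m,w)} over all pairs (m,w) with σ(m) = w and σ(w) ≠ m; times y_w^{P(σ⁻¹(w),w)/P(m,w)} over all pairs (m,w) with σ(m) ≠ w and σ(w) = m; times (1 − x_m^{P(m,σ⁻¹(m))/P(m,w)} · y_w^{P(σ⁻¹(w),w)/P(m,w)}) over all pairs (m,w) with σ(m) ≠ w and σ(w) ≠ m. -/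
open MeasureTheory

/-- A permutation `σ` of `M ⊔ W` exchanging the two sides is encoded as the pair of
bijections `a : M ≃ W` (with `σ m = a m`) and `b : W ≃ M` (with `σ w = b w`);
then `σ⁻¹ m = b.symm m` and `σ⁻¹ w = a.symm w`.
`σ` is a stable permutation when every person weakly prefers their successor to their
predecessor, and no pair `(m, w)` with `σ m ≠ w` and `σ w ≠ m` satisfies
`w ≻ₘ σ⁻¹ m` and `m ≻_w σ⁻¹ w`. -/
def IsStablePerm {N : ℕ} (P : Fin N × Fin N → ℝ)
    (XY : (Fin N × Fin N → ℝ) × (Fin N × Fin N → ℝ)) (a b : Fin N ≃ Fin N) : Prop :=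
  (∀ m, a m = b.symm m ∨ PrefM P XY.1 m (a m) (b.symm m)) ∧
  (∀ w, b w = a.symm w ∨ PrefW P XY.2 w (b w) (a.symm w)) ∧
  ¬ ∃ m w, a m ≠ w ∧ b w ≠ m ∧ PrefM P XY.1 m w (b.symm m) ∧ PrefW P XY.2 w m (a.symm w)

/-!
The map overwriting the entries `X (m, σ⁻¹ m)` and `Y (σ⁻¹ w, w)` by fresh independent uniform
variables `x m` and `y w` preserves the uniform distribution. Given `x` and `y`, stability becomes
one condition on `(X (m, w), Y (m, w))` for each pair `(m, w)`, and none of these conditions reads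
an overwritten entry. They are therefore conditionally independent, and the probability of each is
computed from `ℙ (t ^ p < c ^ q) = c ^ (q / p)` for `t` uniform on `[0,1]`.
-/

section ProductMeasures

variable {α β γ δ : Type*} [MeasurableSpace α] [MeasurableSpace β] [MeasurableSpace γ]
  [MeasurableSpace δ]

lemma measurePreserving_prodProdProdComm (μ : Measure α) (ν : Measure β) (ρ : Measure γ)
    (τ : Measure δ) [SFinite μ] [SFinite ν] [SFinite ρ] [SFinite τ] :
    MeasurePreserving (Equiv.prodProdProdComm α β γ δ)
      ((μ.prod ν).prod (ρ.prod τ)) ((μ.prod ρ).prod (ν.prod τ)) := by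
  have swap_middle : MeasurePreserving (fun z : β × γ × δ => (z.2.1, z.1, z.2.2))
      (ν.prod (ρ.prod τ)) (ρ.prod (ν.prod τ)) :=
    (measurePreserving_prodAssoc ρ ν τ).comp
      ((Measure.measurePreserving_swap.prod (.id τ)).comp
        ((measurePreserving_prodAssoc ν ρ τ).symm _))
  exact ((measurePreserving_prodAssoc μ ρ (ν.prod τ)).symm _).comp
    (((MeasurePreserving.id μ).prod swap_middle).comp
      (measurePreserving_prodAssoc μ ν (ρ.prod τ)))

lemma measureReal_prod_eq_integral (μ : Measure α) (ν : Measure β) [SFinite ν]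
    {s : Set (α × β)} (hs : MeasurableSet s) (hfin : (μ.prod ν) s ≠ ⊤) :
    (μ.prod ν).real s = ∫ x, ν.real (Prod.mk x ⁻¹' s) ∂μ := by
  simp only [measureReal_def]
  rw [Measure.prod_apply hs, integral_toReal (measurable_measure_prodMk_left hs).aemeasurable
    (Measure.ae_measure_lt_top hs hfin)]

lemma measureReal_pi_prod_pi_forall_mem {ι : Type*} [Fintype ι] (μ : ι → Measure α)
    (ν : ι → Measure β) [∀ i, SigmaFinite (μ i)] [∀ i, SigmaFinite (ν i)]
    (s : ι → Set (α × β)) :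
    ((Measure.pi μ).prod (Measure.pi ν)).real {z | ∀ i, (z.1 i, z.2 i) ∈ s i} =
      ∏ i, ((μ i).prod (ν i)).real (s i) := by
  have preimage_eq : MeasurableEquiv.arrowProdEquivProdArrow α β ι ⁻¹'
      {z | ∀ i, (z.1 i, z.2 i) ∈ s i} = Set.univ.pi s := by
    ext z
    simp [MeasurableEquiv.arrowProdEquivProdArrow, Equiv.arrowProdEquivProdArrow]
  simp only [measureReal_def]
  rw [← (measurePreserving_arrowProdEquivProdArrow α β ι μ ν).measure_preimage_equiv,
    preimage_eq, Measure.pi_pi, ENNReal.toReal_prod]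

lemma measurable_extend_prod {ι κ : Type*} (e : κ → ι) :
    Measurable fun z : (κ → α) × (ι → α) => Function.extend e z.1 z.2 := by
  classical
  refine measurable_pi_lambda _ fun i => ?_
  unfold Function.extend
  split_ifs <;> fun_prop

lemma measurePreserving_extend {ι κ : Type*} [Fintype ι] [Fintype κ] {e : κ → ι}
    (he : e.Injective) (μ : ι → Measure α) [∀ i, SigmaFinite (μ i)]
    [∀ k, IsProbabilityMeasure (μ (e k))] :
    MeasurePreserving (fun z : (κ → α) × (ι → α) => Function.extend e z.1 z.2)
      ((Measure.pi fun k => μ (e k)).prod (Measure.pi μ)) (Measure.pi μ) := by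
  classical
  refine ⟨measurable_extend_prod e, (Measure.pi_eq fun s hs => ?_).symm⟩
  have preimage_eq : (fun z : (κ → α) × (ι → α) => Function.extend e z.1 z.2) ⁻¹' Set.univ.pi s =
      (Set.univ.pi fun k => s (e k)) ×ˢ
        (Set.univ.pi fun i => if i ∈ Set.range e then Set.univ else s i) := by
    ext z
    simp only [Set.mem_preimage, Set.mem_prod, Set.mem_univ_pi]
    refine ⟨fun h => ⟨fun k => by simpa [he.extend_apply] using h (e k), fun i => ?_⟩,
      fun ⟨hrange, hcompl⟩ i => ?_⟩
    · split_ifs with hi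
      · trivial
      · simpa [Function.extend_apply' _ _ _ hi] using h i
    · by_cases hi : i ∈ Set.range e
      · obtain ⟨k, rfl⟩ := hi
        simpa [he.extend_apply] using hrange k
      · simpa [Function.extend_apply' _ _ _ hi, hi] using hcompl i
  have prod_range : ∏ k, μ (e k) (s (e k)) = ∏ i, if i ∈ Set.range e then μ i (s i) else 1 :=
    Finset.prod_of_injOn e he.injOn (by simp) (fun i _ hi => if_neg (by simpa using hi))
      (by simp)
  rw [Measure.map_apply (measurable_extend_prod e) (.univ_pi hs), preimage_eq, Measure.prod_prod,
    Measure.pi_pi, Measure.pi_pi, prod_range, ← Finset.prod_mul_distrib]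
  refine Finset.prod_congr rfl fun i _ => ?_
  split_ifs with hi
  · obtain ⟨k, rfl⟩ := hi
    simp
  · simp

end ProductMeasures

/-- The uniform distribution on `[0,1]`, as a measure on `ℝ`. -/
noncomputable abbrev unifUnit : Measure ℝ := volume.restrict (Set.Icc 0 1)

instance : IsProbabilityMeasure unifUnit := ⟨by simp⟩

lemma restrict_pi_Icc_eq_pi_unifUnit (ι : Type*) [Fintype ι] :
    (volume : Measure (ι → ℝ)).restrict (Set.univ.pi fun _ => Set.Icc 0 1) =
      Measure.pi fun _ => unifUnit := by
  rw [volume_pi, Measure.restrict_pi_pi]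

lemma unifUnit_real_rpow_lt_rpow {c p q : ℝ} (hc : c ∈ Set.Icc (0 : ℝ) 1) (hp : 0 < p)
    (hq : 0 ≤ q) : unifUnit.real {t | t ^ p < c ^ q} = c ^ (q / p) := by
  have root_nonneg : 0 ≤ c ^ (q / p) := Real.rpow_nonneg hc.1 _
  have root_le_one : c ^ (q / p) ≤ 1 := Real.rpow_le_one hc.1 hc.2 (div_nonneg hq hp.le)
  have root_rpow : (c ^ (q / p)) ^ p = c ^ q := by
    rw [← Real.rpow_mul hc.1, div_mul_cancel₀ _ hp.ne']
  have inter_eq : {t : ℝ | t ^ p < c ^ q} ∩ Set.Icc 0 1 = Set.Ico 0 (c ^ (q / p)) := by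
    ext t
    rw [← root_rpow]
    constructor
    · rintro ⟨hlt, ht, -⟩
      exact ⟨ht, (Real.rpow_lt_rpow_iff ht root_nonneg hp).1 hlt⟩
    · rintro ⟨ht, hlt⟩
      exact ⟨Real.rpow_lt_rpow ht hlt hp, ht, hlt.le.trans root_le_one⟩
  rw [measureReal_restrict_apply (measurableSet_lt (by fun_prop) measurable_const), inter_eq,
    Real.volume_real_Ico_of_le root_nonneg, sub_zero]

section StablePermutations

variable {N : ℕ} (P : Fin N × Fin N → ℝ) (a b : Fin N ≃ Fin N)

lemma measurableSet_isStablePerm : MeasurableSet {XY | IsStablePerm P XY a b} := by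
  have measurable_prefM (m w₁ w₂ : Fin N) : Measurable
      fun XY : (Fin N × Fin N → ℝ) × (Fin N × Fin N → ℝ) => PrefM P XY.1 m w₁ w₂ :=
    measurableSet_setOfPred.1 (measurableSet_lt (by fun_prop) (by fun_prop))
  have measurable_prefW (w m₁ m₂ : Fin N) : Measurable
      fun XY : (Fin N × Fin N → ℝ) × (Fin N × Fin N → ℝ) => PrefW P XY.2 w m₁ m₂ :=
    measurableSet_setOfPred.1 (measurableSet_lt (by fun_prop) (by fun_prop))
  unfold IsStablePerm
  exact measurableSet_setOfPred.2 (by fun_prop)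

/-- The values of `(X (m, w), Y (m, w))` for which the pair `(m, w)` does not violate the stability
of the permutation `(a, b)`, when `X (i, σ⁻¹ i) = x i` for every man `i` and `Y (σ⁻¹ j, j) = y j`
for every woman `j`. -/
def stableValues (x y : Fin N → ℝ) (mw : Fin N × Fin N) : Set (ℝ × ℝ) :=
  if a mw.1 = mw.2 then
    if b mw.2 = mw.1 then Set.univ
    else {s | s ^ P mw < x mw.1 ^ P (mw.1, b.symm mw.1)} ×ˢ Set.univ
  else
    if b mw.2 = mw.1 then Set.univ ×ˢ {t | t ^ P mw < y mw.2 ^ P (a.symm mw.2, mw.2)}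
    else ({s | s ^ P mw < x mw.1 ^ P (mw.1, b.symm mw.1)} ×ˢ
      {t | t ^ P mw < y mw.2 ^ P (a.symm mw.2, mw.2)})ᶜ

lemma isStablePerm_iff_forall_mem_stableValues (X Y : Fin N × Fin N → ℝ) :
    IsStablePerm P (X, Y) a b ↔ ∀ mw, (X mw, Y mw) ∈
      stableValues P a b (fun m => X (m, b.symm m)) (fun w => Y (a.symm w, w)) mw := by
  constructor
  · rintro ⟨hM, hW, hblock⟩ ⟨m, w⟩
    unfold stableValues
    split_ifs with ha hb hb
    · trivial
    · obtain rfl : a m = w := ha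
      exact ⟨(hM m).resolve_left fun h => hb (b.eq_symm_apply.1 h), trivial⟩
    · obtain rfl : b w = m := hb
      exact ⟨trivial, (hW w).resolve_left fun h => ha (a.eq_symm_apply.1 h)⟩
    · exact fun h => hblock ⟨m, w, ha, hb, h.1, h.2⟩
  · intro h
    refine ⟨fun m => or_iff_not_imp_left.2 fun hm => ?_,
      fun w => or_iff_not_imp_left.2 fun hw => ?_, ?_⟩
    · have hb : b (a m) ≠ m := fun hb => hm (b.eq_symm_apply.2 hb)
      simpa [stableValues, hb, PrefM] using h (m, a m)
    · have ha : a (b w) ≠ w := fun ha => hw (a.eq_symm_apply.2 ha)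
      simpa [stableValues, ha, PrefW] using h (b w, w)
    · rintro ⟨m, w, ha, hb, hprefM, hprefW⟩
      have hmw := h (m, w)
      rw [stableValues, if_neg ha, if_neg hb] at hmw
      exact hmw ⟨hprefM, hprefW⟩

/-- Overwrites the entries `X (m, σ⁻¹ m)` and `Y (σ⁻¹ w, w)` of `(X, Y)` by `x m` and `y w`. The
argument is `((x, y), (X, Y))`. -/
noncomputable def overwritePredecessors
    (z : ((Fin N → ℝ) × (Fin N → ℝ)) × ((Fin N × Fin N → ℝ) × (Fin N × Fin N → ℝ))) :
    (Fin N × Fin N → ℝ) × (Fin N × Fin N → ℝ) :=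
  (Function.extend (fun m => (m, b.symm m)) z.1.1 z.2.1,
    Function.extend (fun w => (a.symm w, w)) z.1.2 z.2.2)

lemma measurePreserving_overwritePredecessors :
    MeasurePreserving (overwritePredecessors a b)
      (((Measure.pi fun _ => unifUnit).prod (Measure.pi fun _ => unifUnit)).prod (unifBox N))
      (unifBox N) :=
  have overwriteM := measurePreserving_extend (e := fun m => (m, b.symm m))
    (fun _ _ h => congrArg Prod.fst h) fun _ => unifUnit
  have overwriteW := measurePreserving_extend (e := fun w => (a.symm w, w))
    (fun _ _ h => congrArg Prod.snd h) fun _ => unifUnit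
  (overwriteM.prod overwriteW).comp (measurePreserving_prodProdProdComm _ _ _ _)

lemma isStablePerm_overwritePredecessors_iff (x y : Fin N → ℝ) (X Y : Fin N × Fin N → ℝ) :
    IsStablePerm P (overwritePredecessors a b ((x, y), (X, Y))) a b ↔
      ∀ mw, (X mw, Y mw) ∈ stableValues P a b x y mw := by
  have injM : (fun m => (m, b.symm m)).Injective := fun _ _ h => congrArg Prod.fst h
  have injW : (fun w => (a.symm w, w)).Injective := fun _ _ h => congrArg Prod.snd h
  rw [overwritePredecessors, isStablePerm_iff_forall_mem_stableValues]
  simp only [injM.extend_apply x X, injW.extend_apply y Y]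
  refine forall_congr' fun ⟨m, w⟩ => ?_
  have entryM (hb : b w ≠ m) : Function.extend (fun m => (m, b.symm m)) x X (m, w) = X (m, w) :=
    Function.extend_apply' _ _ _ (by grind)
  have entryW (ha : a m ≠ w) : Function.extend (fun w => (a.symm w, w)) y Y (m, w) = Y (m, w) :=
    Function.extend_apply' _ _ _ (by grind)
  unfold stableValues
  split_ifs with ha hb hb
  · rfl
  · simp only [Set.mem_prod, entryM hb, Set.mem_univ]
  · simp only [Set.mem_prod, entryW ha, Set.mem_univ]
  · simp only [entryM hb, entryW ha]

lemma unifBox_real_isStablePerm :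
    (unifBox N).real {XY | IsStablePerm P XY a b} =
      ∫ x, ∫ y, ∏ mw, (unifUnit.prod unifUnit).real (stableValues P a b x y mw)
        ∂Measure.pi (fun _ => unifUnit) ∂Measure.pi fun _ => unifUnit := by
  have overwrite := measurePreserving_overwritePredecessors a b
  have hS := measurableSet_isStablePerm P a b
  have : IsProbabilityMeasure (unifBox N) := by unfold unifBox; infer_instance
  rw [← overwrite.measureReal_preimage hS.nullMeasurableSet,
    measureReal_prod_eq_integral _ _ (overwrite.measurable hS) (measure_ne_top _ _),
    integral_prod _ (Measure.integrable_measure_prodMk_left (overwrite.measurable hS)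
      (measure_ne_top _ _))]
  congr! 4 with x y
  rw [← measureReal_pi_prod_pi_forall_mem, unifBox]
  congr 1
  ext ⟨X, Y⟩
  exact isStablePerm_overwritePredecessors_iff P a b x y X Y

lemma unifUnit_prod_real_stableValues (hP : ∀ mw, 0 < P mw) {x y : Fin N → ℝ}
    {mw : Fin N × Fin N} (hx : x mw.1 ∈ Set.Icc (0 : ℝ) 1) (hy : y mw.2 ∈ Set.Icc (0 : ℝ) 1) :
    (unifUnit.prod unifUnit).real (stableValues P a b x y mw) =
      (if a mw.1 = mw.2 ∧ b mw.2 ≠ mw.1 then x mw.1 ^ (P (mw.1, b.symm mw.1) / P mw) else 1) *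
      (if a mw.1 ≠ mw.2 ∧ b mw.2 = mw.1 then y mw.2 ^ (P (a.symm mw.2, mw.2) / P mw) else 1) *
      (if a mw.1 ≠ mw.2 ∧ b mw.2 ≠ mw.1 then
        1 - x mw.1 ^ (P (mw.1, b.symm mw.1) / P mw) * y mw.2 ^ (P (a.symm mw.2, mw.2) / P mw)
      else 1) := by
  have probM := unifUnit_real_rpow_lt_rpow hx (hP mw) (hP (mw.1, b.symm mw.1)).le
  have probW := unifUnit_real_rpow_lt_rpow hy (hP mw) (hP (a.symm mw.2, mw.2)).le
  have measurable_lt (p c : ℝ) : MeasurableSet {t : ℝ | t ^ p < c} :=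
    measurableSet_lt (by fun_prop) measurable_const
  by_cases ha : a mw.1 = mw.2 <;> by_cases hb : b mw.2 = mw.1
  · simp [stableValues, ha, hb]
  · simp [stableValues, ha, hb, probM]
  · simp [stableValues, ha, hb, probW]
  · simp [stableValues, ha, hb, probM, probW,
      probReal_compl_eq_one_sub ((measurable_lt _ _).prod (measurable_lt _ _))]

end StablePermutations

/-- Integral formula for the probability that a permutation is stable, under the symmetric
power preference distribution with power function `P`. -/
theorem prob_stablePerm_eq_integral (N : ℕ) (hN : 1 ≤ N) (P : Fin N × Fin N → ℝ)
    (hP : ∀ mw, 0 < P mw) (a b : Fin N ≃ Fin N) :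
    (unifBox N {XY | IsStablePerm P XY a b}).toReal =
      ∫ x in Set.univ.pi fun _ : Fin N => Set.Icc (0:ℝ) 1,
        ∫ y in Set.univ.pi fun _ : Fin N => Set.Icc (0:ℝ) 1,
          (∏ mw ∈ Finset.univ.filter fun mw : Fin N × Fin N => a mw.1 = mw.2 ∧ b mw.2 ≠ mw.1,
              x mw.1 ^ (P (mw.1, b.symm mw.1) / P mw)) *
          (∏ mw ∈ Finset.univ.filter fun mw : Fin N × Fin N => a mw.1 ≠ mw.2 ∧ b mw.2 = mw.1,
              y mw.2 ^ (P (a.symm mw.2, mw.2) / P mw)) *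
          ∏ mw ∈ Finset.univ.filter fun mw : Fin N × Fin N => a mw.1 ≠ mw.2 ∧ b mw.2 ≠ mw.1,
            (1 - x mw.1 ^ (P (mw.1, b.symm mw.1) / P mw) *
              y mw.2 ^ (P (a.symm mw.2, mw.2) / P mw)) := by
  have hbox : MeasurableSet (Set.univ.pi fun _ : Fin N => Set.Icc (0 : ℝ) 1) :=
    .univ_pi fun _ => measurableSet_Icc
  rw [← measureReal_def, unifBox_real_isStablePerm, ← restrict_pi_Icc_eq_pi_unifUnit]
  refine setIntegral_congr_fun hbox fun x hx => setIntegral_congr_fun hbox fun y hy => ?_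
  simp only [unifUnit_prod_real_stableValues P a b hP (hx _ trivial) (hy _ trivial),
    Finset.prod_mul_distrib, Finset.prod_filter]
end

section
/- Under the symmetric power preference distribution with positive power function P, for every matching μ : M ≃ W: the probability that μ is stable and women-optimal equals the sum, over all permutations σ of M ⊔ W whose restriction to M agrees with μ, of (−1)^{C(σ)} times the probability that σ is a stable permutation, where C(σ) is the number of cycles of σ of length greater than 2; symmetrically, the probability that μ is stable and men-optimal equals the sum over all permutations σ whose restriction to W agrees with μ⁻¹ of (−1)^{C(σ)} times the probability that σ is stable. -/
open MeasureTheory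

/-- `C(σ)`: the number of cycles of `σ` of length greater than `2`.  The cycles of the
side-exchanging permutation `σ = (a, b)` through a man `m` are `m → a m → b (a m) → ⋯`,
so they correspond to the orbits of `a.trans b : M ≃ M` (an orbit of size `k` giving a
cycle of length `2k`); `C(σ)` is the number of nontrivial cycles of `a.trans b`,
i.e. `Equiv.Perm.cycleType (a.trans b) |>.card`. -/
def cyclesGtTwo {N : ℕ} (a b : Fin N ≃ Fin N) : ℕ :=
  Equiv.Perm.cycleType (a.trans b) |>.card

/-!
Almost surely no one is indifferent, so it suffices to prove the identity for indicators under
fixed strict preferences; the men-optimal half then follows by exchanging the two sides. If `μ` is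
stable, call `k` the successor of `m` when `μ k` is the favourite of `m` among the women who
prefer `m` to their partner. A permutation agreeing with `μ` on `M` is stable exactly when each of
its nontrivial cycles runs along successors, so the signed count of stable permutations is the
Leibniz expansion of `det (1 - A)`, where `A` is the adjacency matrix of the successor relation.
If `μ` is women-optimal, only the identity term survives. Otherwise, for some stable `μ'`, the men
who prefer `μ` to `μ'` form a nonempty set closed under successors; each of the corresponding rows
of `1 - A` is supported on this set and sums to zero, so the determinant vanishes.
-/

namespace StableMatching

section SignedCycleExpansion

variable {α R : Type*} [Fintype α] [DecidableEq α] [CommRing R]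

lemma sign_mul_neg_one_pow_card_support (π : Equiv.Perm α) :
    ((Equiv.Perm.sign π : ℤ) : R) * (-1) ^ π.support.card = (-1) ^ π.cycleType.card := by
  rw [Equiv.Perm.sign_of_cycleType, Equiv.Perm.sum_cycleType]
  push_cast
  rw [pow_add, mul_right_comm, ← mul_pow, neg_one_mul, neg_neg, one_pow, one_mul]

lemma det_one_sub_eq_sum_cycleType (A : Matrix α α R) (hA : ∀ i, A i i = 0) :
    (1 - A).det =
      ∑ π : Equiv.Perm α, (-1) ^ π.cycleType.card * ∏ i ∈ π.support, A i (π i) := by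
  rw [← Matrix.det_transpose, Matrix.det_apply']
  refine Finset.sum_congr rfl fun π _ => ?_
  have hprod : ∏ i, (1 - A).transpose (π i) i = ∏ i ∈ π.support, -A i (π i) := by
    refine (Finset.prod_subset (Finset.subset_univ _) fun i _ hi => ?_).symm.trans
      (Finset.prod_congr rfl fun i hi => ?_)
    · simp [Equiv.Perm.notMem_support.mp hi, hA]
    · simp [Matrix.one_apply_ne' (Equiv.Perm.mem_support.mp hi)]
  rw [hprod, Finset.prod_neg, ← mul_assoc, sign_mul_neg_one_pow_card_support]

open Classical in
lemma det_one_sub_of_rel (T : α → α → Prop) [Std.Irrefl T] :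
    (1 - Matrix.of fun i j => if T i j then (1 : R) else 0).det =
      ∑ π : Equiv.Perm α,
        (-1) ^ π.cycleType.card * if ∀ i, π i = i ∨ T i (π i) then 1 else 0 := by
  rw [det_one_sub_eq_sum_cycleType _ fun i => if_neg (irrefl i)]
  refine Finset.sum_congr rfl fun π _ => ?_
  simp only [Matrix.of_apply, Finset.prod_boole, Equiv.Perm.mem_support, or_iff_not_imp_left, ne_eq]

lemma det_eq_zero_of_sum_row_eq_zero {A : Matrix α α R} {S : Set α} (hS : S.Nonempty)
    (hzero : ∀ i ∈ S, ∀ j ∉ S, A i j = 0) (hsum : ∀ i ∈ S, ∑ j, A i j = 0) : A.det = 0 := by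
  classical
  have hblock : (A.toSquareBlockProp (· ∈ S)).mulVec 1 = 0 := by
    funext i
    calc (A.toSquareBlockProp (· ∈ S)).mulVec 1 i = ∑ j : {j // j ∈ S}, A i j := by
          simp [Matrix.mulVec, dotProduct, Matrix.toSquareBlockProp_def]
      _ = ∑ j, A i j := by
          rw [← Fintype.sum_subtype_add_sum_subtype (· ∈ S),
            Fintype.sum_eq_zero (fun j : {j // j ∉ S} => A i j) fun j => hzero i i.2 j j.2,
            add_zero]
      _ = 0 := hsum i i.2
  obtain ⟨i, hi⟩ := hS
  rw [Matrix.twoBlockTriangular_det' A (· ∈ S) hzero,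
    Matrix.det_eq_zero_of_mulVec_eq_zero_of_mem_nonZeroDivisors hblock (i := ⟨i, hi⟩)
      (one_mem _), zero_mul]

open Classical in
lemma det_one_sub_of_rel_eq_zero {T : α → α → Prop} {S : Set α} (hS : S.Nonempty)
    (hT : ∀ i ∈ S, ∃ j ∈ S, ∀ k, T i k ↔ k = j) :
    (1 - Matrix.of fun i j => if T i j then (1 : R) else 0).det = 0 := by
  refine det_eq_zero_of_sum_row_eq_zero hS (fun i hi k hk => ?_) fun i hi => ?_
  · obtain ⟨j, hj, hTi⟩ := hT i hi
    have hkj : k ≠ j := fun h => hk (h ▸ hj)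
    have hik : i ≠ k := fun h => hk (h ▸ hi)
    simp [Matrix.one_apply_ne hik, hTi, hkj]
  · obtain ⟨j, -, hTi⟩ := hT i hi
    simp [Matrix.one_apply, hTi]

lemma cycleType_permCongr {β : Type*} [Fintype β] [DecidableEq β] (e : α ≃ β)
    (π : Equiv.Perm α) : (e.permCongr π).cycleType = π.cycleType := by
  let f : α ≃ {_b : β // True} := e.trans (Equiv.subtypeUnivEquiv fun _ => trivial).symm
  have hext : e.permCongr π = π.extendDomain f := by
    ext b
    exact (Equiv.Perm.extendDomain_apply_subtype π f trivial).symm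
  rw [hext, Equiv.Perm.cycleType_extendDomain]

lemma cycleType_trans_comm {β : Type*} [Fintype β] [DecidableEq β] (a : α ≃ β) (b : β ≃ α) :
    Equiv.Perm.cycleType (a.trans b) = Equiv.Perm.cycleType (b.trans a) := by
  rw [← cycleType_permCongr a]
  congr 1
  ext w
  simp

end SignedCycleExpansion

section Preferences

variable {M W : Type*}

/-- Stability of the matching `μ` when `r m` and `s w` are the preference relations of the man `m`
and the woman `w`, with `r m w₁ w₂` meaning that `m` prefers `w₁` to `w₂`. -/
def Stable (r : M → W → W → Prop) (s : W → M → M → Prop) (μ : M ≃ W) : Prop :=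
  ¬ ∃ m w, r m w (μ m) ∧ s w m (μ.symm w)

/-- The matching `μ` is stable, and each woman likes it at least as much as any stable matching. -/
def WomenOptimal (r : M → W → W → Prop) (s : W → M → M → Prop) (μ : M ≃ W) : Prop :=
  Stable r s μ ∧ ∀ μ' : M ≃ W, Stable r s μ' →
    ∀ w, μ.symm w = μ'.symm w ∨ s w (μ.symm w) (μ'.symm w)

/-- The matching `μ` is stable, and each man likes it at least as much as any stable matching. -/
def MenOptimal (r : M → W → W → Prop) (s : W → M → M → Prop) (μ : M ≃ W) : Prop :=
  Stable r s μ ∧ ∀ μ' : M ≃ W, Stable r s μ' → ∀ m, μ m = μ' m ∨ r m (μ m) (μ' m)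

/-- Stability of the side-exchanging permutation `σ` of `M ⊔ W` that is `a` on `M` and `b` on `W`;
thus `σ⁻¹` is `b.symm` on `M` and `a.symm` on `W`. -/
def StablePerm (r : M → W → W → Prop) (s : W → M → M → Prop) (a : M ≃ W) (b : W ≃ M) : Prop :=
  (∀ m, a m = b.symm m ∨ r m (a m) (b.symm m)) ∧
  (∀ w, b w = a.symm w ∨ s w (b w) (a.symm w)) ∧
  ¬ ∃ m w, a m ≠ w ∧ b w ≠ m ∧ r m w (b.symm m) ∧ s w m (a.symm w)

/-- The man `k` comes next after `m` at the matching `μ`: his partner `μ k` is the favourite of `m`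
among the women who prefer `m` to their own partner. A rotation exposed at `μ` is a cycle of this
relation. -/
def IsNext (r : M → W → W → Prop) (s : W → M → M → Prop) (μ : M ≃ W) (m k : M) : Prop :=
  s (μ k) m k ∧ ∀ w, s w m (μ.symm w) → ¬ r m w (μ k)

variable {r : M → W → W → Prop} {s : W → M → M → Prop} {μ μ' : M ≃ W}

lemma stable_symm_iff : Stable s r μ.symm ↔ Stable r s μ := by
  simp only [Stable, Equiv.symm_symm]
  rw [exists_comm]
  simp only [and_comm]

lemma menOptimal_iff_womenOptimal_symm : MenOptimal r s μ ↔ WomenOptimal s r μ.symm := by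
  refine and_congr stable_symm_iff.symm ⟨fun h μ' hμ' m => ?_, fun h μ' hμ' m => ?_⟩
  · exact h μ'.symm (stable_symm_iff.mp hμ') m
  · exact h μ'.symm (stable_symm_iff.mpr hμ') m

lemma stablePerm_comm {a : M ≃ W} {b : W ≃ M} : StablePerm r s a b ↔ StablePerm s r b a := by
  have hblock : (∃ m w, a m ≠ w ∧ b w ≠ m ∧ r m w (b.symm m) ∧ s w m (a.symm w)) ↔
      ∃ w m, b w ≠ m ∧ a m ≠ w ∧ s w m (a.symm w) ∧ r m w (b.symm m) := by
    rw [exists_comm]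
    simp only [and_comm, and_left_comm]
  rw [StablePerm, StablePerm, hblock, and_left_comm]

lemma StablePerm.stable_left [∀ m, IsStrictOrder W (r m)] [∀ w, Std.Irrefl (s w)]
    {a : M ≃ W} {b : W ≃ M} (h : StablePerm r s a b) : Stable r s a := by
  obtain ⟨hmen, -, hblock⟩ := h
  rintro ⟨m, w, hm, hw⟩
  have hm' : r m w (b.symm m) := (hmen m).elim (fun h => h ▸ hm) (_root_.trans hm)
  refine hblock ⟨m, w, ?_, ?_, hm', hw⟩
  · rintro rfl
    rw [Equiv.symm_apply_apply] at hw
    exact irrefl m hw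
  · rintro rfl
    rw [Equiv.symm_apply_apply] at hm'
    exact irrefl w hm'

lemma StablePerm.stable_right [∀ m, Std.Irrefl (r m)] [∀ w, IsStrictOrder M (s w)]
    {a : M ≃ W} {b : W ≃ M} (h : StablePerm r s a b) : Stable r s b.symm :=
  stable_symm_iff.mp (stablePerm_comm.mp h).stable_left

lemma stablePerm_symm_right (hμ : Stable r s μ) : StablePerm r s μ μ.symm :=
  ⟨fun _ => Or.inl rfl, fun _ => Or.inl rfl, fun ⟨m, w, _, _, h⟩ => hμ ⟨m, w, h⟩⟩

lemma WomenOptimal.stablePerm_iff [∀ m, Std.Irrefl (r m)] [∀ w, IsStrictOrder M (s w)]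
    (hμ : WomenOptimal r s μ) {b : W ≃ M} : StablePerm r s μ b ↔ b = μ.symm := by
  refine ⟨fun h => Equiv.ext fun w => ?_, fun h => h ▸ stablePerm_symm_right hμ.1⟩
  refine (h.2.1 w).resolve_right fun hb => ?_
  rcases hμ.2 b.symm h.stable_right w with hw | hw
  · exact irrefl (b w) (hw ▸ hb)
  · exact asymm hb hw

instance [∀ w, Std.Irrefl (s w)] : Std.Irrefl (IsNext r s μ) :=
  ⟨fun m h => irrefl m h.1⟩

/-- A permutation `π` of the men encodes the side-exchanging permutation that is `μ` on `M` and has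
inverse `m ↦ μ (π m)` on `M`. -/
lemma stablePerm_iff_forall_isNext [∀ m, Std.Irrefl (r m)] [∀ m, Std.Trichotomous (r m)]
    [∀ w, Std.Irrefl (s w)] (hμ : Stable r s μ) (π : Equiv.Perm M) :
    StablePerm r s μ (π.trans μ).symm ↔ ∀ m, π m = m ∨ IsNext r s μ m (π m) := by
  constructor
  · rintro ⟨-, hwomen, hblock⟩ m
    refine or_iff_not_imp_left.mpr fun hm => ⟨?_, fun w hs hr => hblock ⟨m, w, ?_, ?_, hr, hs⟩⟩
    · simpa [Ne.symm hm] using hwomen (μ (π m))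
    · rintro rfl
      rw [Equiv.symm_apply_apply] at hs
      exact irrefl m hs
    · rintro rfl
      exact irrefl w (by simpa using hr)
  · refine fun h => ⟨fun m => ?_, fun w => ?_, ?_⟩
    · rcases h m with hm | hm
      · exact Or.inl (congrArg μ hm.symm)
      · have hr : ¬ r m (μ (π m)) (μ m) := fun hr =>
          hμ ⟨m, _, hr, by simpa using hm.1⟩
        exact (trichotomous_of (r m) (μ m) (μ (π m))).elim Or.inr fun h' =>
          Or.inl (h'.resolve_right hr)
    · obtain ⟨m, rfl⟩ := (π.trans μ).surjective w
      simpa [eq_comm] using (h m).imp_right And.left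
    · rintro ⟨m, w, -, -, hr, hs⟩
      rcases h m with hm | hm
      · exact hμ ⟨m, w, by simpa [hm] using hr, hs⟩
      · exact hm.2 w hs hr

lemma IsNext.unique [∀ m, Std.Trichotomous (r m)] {m k l : M} (hk : IsNext r s μ m k)
    (hl : IsNext r s μ m l) : k = l :=
  μ.injective (Std.Trichotomous.trichotomous (r := r m) _ _
    (hl.2 _ (by simpa using hk.1)) (hk.2 _ (by simpa using hl.1)))

lemma exists_isNext [Finite W] [∀ m, IsStrictOrder W (r m)] {m : M} {w : W}
    (hw : s w m (μ.symm w)) : ∃ k, IsNext r s μ m k := by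
  obtain ⟨v, hv, hmin⟩ := (Finite.wellFounded_of_trans_of_irrefl (r m)).has_min
    {w | s w m (μ.symm w)} ⟨w, hw⟩
  exact ⟨μ.symm v, by simpa using hv, by simpa using hmin⟩

lemma Stable.prefers_of_prefers_symm [∀ m, Std.Trichotomous (r m)] [∀ w, Std.Irrefl (s w)]
    (hμ : Stable r s μ) {w : W} (hw : s w (μ'.symm w) (μ.symm w)) :
    r (μ'.symm w) (μ (μ'.symm w)) w := by
  by_contra hr
  have heq : μ (μ'.symm w) = w := Std.Trichotomous.trichotomous (r := r (μ'.symm w)) _ _ hr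
    fun h => hμ ⟨_, w, h, hw⟩
  rw [← heq, Equiv.symm_apply_apply, heq] at hw
  exact irrefl _ hw

/-- The men who prefer `μ` to `μ'` are mapped into themselves by `μ'.symm ∘ μ`, hence, being
finitely many, also by its inverse. -/
lemma Stable.prefers_iff_prefers_symm [Finite M] [∀ m, Std.Irrefl (r m)]
    [∀ m, Std.Trichotomous (r m)] [∀ w, Std.Irrefl (s w)] [∀ w, Std.Trichotomous (s w)]
    (hμ : Stable r s μ) (hμ' : Stable r s μ') (m : M) :
    r m (μ m) (μ' m) ↔ s (μ' m) m (μ.symm (μ' m)) := by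
  have hwoman : ∀ k, r k (μ k) (μ' k) → s (μ k) (μ'.symm (μ k)) k := fun k hk =>
    (stable_symm_iff.mpr hμ').prefers_of_prefers_symm (μ' := μ.symm) hk
  constructor
  · intro hm
    have hpred : r (μ.symm (μ' m)) (μ (μ.symm (μ' m))) (μ' (μ.symm (μ' m))) := by
      refine Equiv.Perm.perm_symm_on_of_perm_on_finite (f := μ.trans μ'.symm)
        (p := fun k => r k (μ k) (μ' k)) (fun k hk => ?_) hm
      have hs : s (μ k) (μ'.symm (μ k)) (μ.symm (μ k)) := by simpa using hwoman k hk
      simpa using hμ.prefers_of_prefers_symm hs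
    simpa using hwoman _ hpred
  · intro hs
    have hs' : s (μ' m) (μ'.symm (μ' m)) (μ.symm (μ' m)) := by simpa using hs
    simpa using hμ.prefers_of_prefers_symm hs'

lemma Stable.exists_isNext_of_prefers [Finite M] [∀ m, IsStrictTotalOrder W (r m)]
    [∀ w, IsStrictTotalOrder M (s w)] (hμ : Stable r s μ) (hμ' : Stable r s μ') {m : M}
    (hm : r m (μ m) (μ' m)) : ∃ k, r k (μ k) (μ' k) ∧ IsNext r s μ m k := by
  have : Finite W := Finite.of_equiv M μ
  have hs : s (μ' m) m (μ.symm (μ' m)) := (hμ.prefers_iff_prefers_symm hμ' m).mp hm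
  obtain ⟨k, hk⟩ := exists_isNext (r := r) hs
  refine ⟨k, ?_, hk⟩
  suffices hk' : s (μ k) (μ'.symm (μ k)) k by
    simpa using ((stable_symm_iff.mpr hμ').prefers_iff_prefers_symm
      (stable_symm_iff.mpr hμ) (μ k)).mp (by simpa using hk')
  by_cases hkm : μ'.symm (μ k) = m
  · exact hkm ▸ hk.1
  · have hr : r m (μ k) (μ' m) := by
      by_contra hr
      exact hkm (by simp [Std.Trichotomous.trichotomous (r := r m) _ _ hr (hk.2 _ hs)])
    have hsm : s (μ k) (μ'.symm (μ k)) m := by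
      by_contra hsm
      exact hkm (Std.Trichotomous.trichotomous (r := s (μ k)) _ _ hsm
        fun h => hμ' ⟨m, μ k, hr, h⟩)
    exact _root_.trans hsm hk.1

lemma Stable.exists_prefers_of_not_womenOptimal [∀ m, Std.Trichotomous (r m)]
    [∀ w, Std.Irrefl (s w)] [∀ w, Std.Trichotomous (s w)] (hμ : Stable r s μ)
    (hopt : ¬ WomenOptimal r s μ) : ∃ μ', Stable r s μ' ∧ ∃ m, r m (μ m) (μ' m) := by
  by_contra! h
  refine hopt ⟨hμ, fun μ' hμ' w => ?_⟩
  by_contra! hw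
  have hs : s w (μ'.symm w) (μ.symm w) := by
    by_contra hs
    exact hw.1 (Std.Trichotomous.trichotomous (r := s w) _ _ hw.2 hs)
  exact h μ' hμ' (μ'.symm w) (by simpa using hμ.prefers_of_prefers_symm hs)

end Preferences

section SignedSum

variable {M W R : Type*} [Fintype M] [DecidableEq M] [CommRing R]
  {r : M → W → W → Prop} {s : W → M → M → Prop} {μ : M ≃ W}

open Classical in
lemma Stable.det_one_sub_isNext_eq_zero [∀ m, IsStrictTotalOrder W (r m)]
    [∀ w, IsStrictTotalOrder M (s w)] (hμ : Stable r s μ)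
    (hopt : ¬ WomenOptimal r s μ) :
    (1 - Matrix.of fun m k => if IsNext r s μ m k then (1 : R) else 0).det = 0 := by
  obtain ⟨μ', hμ', m₀, hm₀⟩ := hμ.exists_prefers_of_not_womenOptimal hopt
  refine det_one_sub_of_rel_eq_zero (S := {m | r m (μ m) (μ' m)}) ⟨m₀, hm₀⟩ fun m hm => ?_
  obtain ⟨k, hkS, hk⟩ := hμ.exists_isNext_of_prefers hμ' hm
  exact ⟨k, hkS, fun l => ⟨fun hl => hl.unique hk, fun h => h ▸ hk⟩⟩

variable [Fintype W] [DecidableEq W]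

open Classical in
lemma Stable.sum_stablePerm_eq_det [∀ m, Std.Irrefl (r m)] [∀ m, Std.Trichotomous (r m)]
    [∀ w, Std.Irrefl (s w)] (hμ : Stable r s μ) :
    ∑ b : W ≃ M, (-1 : R) ^ Multiset.card (Equiv.Perm.cycleType (μ.trans b)) *
        (if StablePerm r s μ b then 1 else 0) =
      (1 - Matrix.of fun m k => if IsNext r s μ m k then (1 : R) else 0).det := by
  rw [det_one_sub_of_rel]
  refine (Fintype.sum_equiv (((Equiv.refl M).equivCongr μ).trans (Equiv.symmEquiv M W)) _ _
    fun π => ?_).symm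
  have hcycle : Equiv.Perm.cycleType (μ.trans (π.trans μ).symm) =
      Equiv.Perm.cycleType π := by
    rw [← Equiv.Perm.cycleType_inv π]
    congr 1
    ext m
    simp
  change _ = (-1 : R) ^ Multiset.card (Equiv.Perm.cycleType (μ.trans (π.trans μ).symm)) *
    (if StablePerm r s μ (π.trans μ).symm then 1 else 0)
  rw [hcycle]
  simp only [stablePerm_iff_forall_isNext hμ]

open Classical in
theorem ite_womenOptimal_eq_sum (r : M → W → W → Prop) (s : W → M → M → Prop) (μ : M ≃ W)
    [∀ m, IsStrictTotalOrder W (r m)] [∀ w, IsStrictTotalOrder M (s w)] :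
    (if WomenOptimal r s μ then (1 : R) else 0) =
      ∑ b : W ≃ M, (-1) ^ Multiset.card (Equiv.Perm.cycleType (μ.trans b)) *
        if StablePerm r s μ b then 1 else 0 := by
  by_cases hμ : Stable r s μ
  · by_cases hopt : WomenOptimal r s μ
    · have hcycle : Equiv.Perm.cycleType (μ.trans μ.symm) = 0 := by
        rw [Equiv.self_trans_symm]
        exact Equiv.Perm.cycleType_one
      simp only [hopt, hopt.stablePerm_iff, mul_ite, mul_one, mul_zero, Finset.sum_ite_eq',
        Finset.mem_univ, if_true, hcycle, Multiset.card_zero, pow_zero]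
    · rw [if_neg hopt, hμ.sum_stablePerm_eq_det, hμ.det_one_sub_isNext_eq_zero hopt]
  · have hperm : ∀ b, ¬ StablePerm r s μ b := fun b h => hμ h.stable_left
    have hopt : ¬ WomenOptimal r s μ := fun h => hμ h.1
    simp [hopt, hperm]

end SignedSum

section Ties

open ProbabilityTheory

variable {Ω β : Type*} [MeasurableSpace Ω] [MeasurableSpace β]

lemma ae_ne_of_indepFun [MeasurableEq β] {ν : Measure Ω}
    [IsFiniteMeasure ν] {U V : Ω → β} (hU : AEMeasurable U ν) (hV : AEMeasurable V ν)
    (hUV : IndepFun U V ν) (hatom : ∀ c, ν (U ⁻¹' {c}) = 0) : ∀ᵐ ω ∂ν, U ω ≠ V ω := by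
  have hsection : ∀ v, ν.map U ((fun u => (u, v)) ⁻¹' Set.diagonal β) = 0 := fun v => by
    have hpre : (fun u => (u, v)) ⁻¹' Set.diagonal β = {v} := by
      ext u
      simp
    rw [hpre, Measure.map_apply_of_aemeasurable hU (measurableSet_singleton v), hatom]
  have hdiag : ν.map (fun ω => (U ω, V ω)) (Set.diagonal β) = 0 := by
    rw [(indepFun_iff_map_prod_eq_prod_map_map hU hV).mp hUV,
      Measure.prod_apply_symm measurableSet_diagonal]
    simp only [hsection, lintegral_zero]
  rw [Measure.map_apply_of_aemeasurable (hU.prodMk hV) measurableSet_diagonal] at hdiag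
  exact measure_eq_zero_iff_ae_notMem.mp hdiag

instance : IsProbabilityMeasure (volume.restrict (Set.Icc (0 : ℝ) 1)) := ⟨by simp⟩

instance (N : ℕ) : IsProbabilityMeasure (unifBox N) := by
  unfold unifBox
  infer_instance

lemma volume_restrict_Icc_rpow_preimage_singleton {p : ℝ} (hp : p ≠ 0) (c : ℝ) :
    volume.restrict (Set.Icc 0 1) ((fun x : ℝ => x ^ p) ⁻¹' {c}) = 0 := by
  have hmeas : Measurable fun x : ℝ => x ^ p := measurable_id.pow_const p
  rw [Measure.restrict_apply (hmeas (measurableSet_singleton c))]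
  refine Set.Subsingleton.measure_zero (fun x hx y hy => ?_) _
  exact Real.rpow_left_injOn hp hx.2.1 hy.2.1 (hx.1.trans hy.1.symm)

lemma ae_injective_rpow {ι : Type*} [Fintype ι] {P : ι → ℝ} (hP : ∀ i, P i ≠ 0) :
    ∀ᵐ X ∂(Measure.pi fun _ : ι => volume.restrict (Set.Icc (0 : ℝ) 1)),
      Function.Injective fun i => X i ^ P i := by
  set κ := Measure.pi fun _ : ι => volume.restrict (Set.Icc (0 : ℝ) 1)
  have hmeas : ∀ i, Measurable fun x : ℝ => x ^ P i := fun i => measurable_id.pow_const _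
  have hindep : iIndepFun (fun i X => X i ^ P i) κ :=
    iIndepFun_pi fun i => (hmeas i).aemeasurable
  have hatom : ∀ i c, κ ((fun X => X i ^ P i) ⁻¹' {c}) = 0 := fun i c =>
    (measurePreserving_eval (fun _ => volume.restrict (Set.Icc (0 : ℝ) 1)) i)
      |>.quasiMeasurePreserving.preimage_null (s := (fun x : ℝ => x ^ P i) ⁻¹' {c})
        (volume_restrict_Icc_rpow_preimage_singleton (hP i) c)
  have hne : ∀ i j, i ≠ j → ∀ᵐ X ∂κ, X i ^ P i ≠ X j ^ P j := fun i j hij =>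
    ae_ne_of_indepFun ((hmeas i).comp (measurable_pi_apply i)).aemeasurable
      ((hmeas j).comp (measurable_pi_apply j)).aemeasurable (hindep.indepFun hij) (hatom i)
  have hall : ∀ᵐ X ∂κ, ∀ i j, i ≠ j → X i ^ P i ≠ X j ^ P j := by
    simpa only [ae_all_iff, Filter.eventually_imp_distrib_left] using hne
  filter_upwards [hall] with X hX i j
  exact not_imp_not.mp (hX i j)

variable {N : ℕ} {P : Fin N × Fin N → ℝ}

lemma isStrictTotalOrder_prefM {X : Fin N × Fin N → ℝ}
    (hX : Function.Injective fun i => X i ^ P i) (m : Fin N) :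
    IsStrictTotalOrder (Fin N) (PrefM P X m) :=
  Function.Injective.isStrictTotalOrder_onFun (r := (· < ·))
    (hX.comp (Prod.mk_right_injective m))

lemma isStrictTotalOrder_prefW {Y : Fin N × Fin N → ℝ}
    (hY : Function.Injective fun i => Y i ^ P i) (w : Fin N) :
    IsStrictTotalOrder (Fin N) (PrefW P Y w) :=
  Function.Injective.isStrictTotalOrder_onFun (r := (· < ·))
    (hY.comp (Prod.mk_left_injective w))

lemma ae_isStrictTotalOrder_prefM (hP : ∀ i, P i ≠ 0) :
    ∀ᵐ XY ∂unifBox N, ∀ m, IsStrictTotalOrder (Fin N) (PrefM P XY.1 m) :=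
  Measure.quasiMeasurePreserving_fst.ae
    ((ae_injective_rpow hP).mono fun _ => isStrictTotalOrder_prefM)

lemma ae_isStrictTotalOrder_prefW (hP : ∀ i, P i ≠ 0) :
    ∀ᵐ XY ∂unifBox N, ∀ w, IsStrictTotalOrder (Fin N) (PrefW P XY.2 w) :=
  Measure.quasiMeasurePreserving_snd.ae
    ((ae_injective_rpow hP).mono fun _ => isStrictTotalOrder_prefW)

lemma measurable_prefM (P : Fin N × Fin N → ℝ) (m w₁ w₂ : Fin N) :
    Measurable fun X => PrefM P X m w₁ w₂ :=
  measurableSet_setOfPred.mp (measurableSet_lt ((measurable_pi_apply _).pow_const _)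
    ((measurable_pi_apply _).pow_const _))

lemma measurable_prefW (P : Fin N × Fin N → ℝ) (w m₁ m₂ : Fin N) :
    Measurable fun Y => PrefW P Y w m₁ m₂ :=
  measurableSet_setOfPred.mp (measurableSet_lt ((measurable_pi_apply _).pow_const _)
    ((measurable_pi_apply _).pow_const _))

end Ties

section RandomPreferences

variable {Ω : Type*} [MeasurableSpace Ω]

open Classical in
lemma measureReal_eq_sum_of_ae_ite_eq_sum {ι : Type*} [Fintype ι] {ν : Measure Ω}
    [IsFiniteMeasure ν] {A : Set Ω} {B : ι → Set Ω} {c : ι → ℝ} (hA : MeasurableSet A)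
    (hB : ∀ i, MeasurableSet (B i))
    (h : ∀ᵐ ω ∂ν, (if ω ∈ A then (1 : ℝ) else 0) = ∑ i, c i * if ω ∈ B i then 1 else 0) :
    ν.real A = ∑ i, c i * ν.real (B i) := by
  have hindicator : A.indicator 1 =ᵐ[ν] fun ω => ∑ i, c i * (B i).indicator (1 : Ω → ℝ) ω := by
    filter_upwards [h] with ω hω
    simpa only [Set.indicator_apply, Pi.one_apply] using hω
  have hint : ∀ i, Integrable ((B i).indicator (1 : Ω → ℝ)) ν := fun i =>
    (integrable_const (1 : ℝ)).indicator (hB i)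
  calc ν.real A = ∫ ω, A.indicator (1 : Ω → ℝ) ω ∂ν := (integral_indicator_one hA).symm
    _ = ∫ ω, ∑ i, c i * (B i).indicator (1 : Ω → ℝ) ω ∂ν := integral_congr_ae hindicator
    _ = ∑ i, c i * ν.real (B i) := by
        rw [integral_finsetSum _ fun i _ => (hint i).const_mul (c i)]
        simp only [integral_const_mul, integral_indicator_one (hB _)]

variable {M W : Type*} {r : Ω → M → W → W → Prop} {s : Ω → W → M → M → Prop}

section Measurability

variable [Finite M] [Finite W]

lemma measurable_stable (hr : ∀ m w₁ w₂, Measurable fun ω => r ω m w₁ w₂)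
    (hs : ∀ w m₁ m₂, Measurable fun ω => s ω w m₁ m₂) (μ : M ≃ W) :
    Measurable fun ω => Stable (r ω) (s ω) μ :=
  .not (.exists fun _ => .exists fun _ => (hr _ _ _).and (hs _ _ _))

lemma measurable_womenOptimal (hr : ∀ m w₁ w₂, Measurable fun ω => r ω m w₁ w₂)
    (hs : ∀ w m₁ m₂, Measurable fun ω => s ω w m₁ m₂) (μ : M ≃ W) :
    Measurable fun ω => WomenOptimal (r ω) (s ω) μ :=
  (measurable_stable hr hs μ).and <| .forall fun μ' => (measurable_stable hr hs μ').imp <|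
    .forall fun _ => measurable_const.or (hs _ _ _)

lemma measurable_stablePerm (hr : ∀ m w₁ w₂, Measurable fun ω => r ω m w₁ w₂)
    (hs : ∀ w m₁ m₂, Measurable fun ω => s ω w m₁ m₂) (a : M ≃ W) (b : W ≃ M) :
    Measurable fun ω => StablePerm (r ω) (s ω) a b :=
  .and (.forall fun _ => measurable_const.or (hr _ _ _)) <|
    .and (.forall fun _ => measurable_const.or (hs _ _ _)) <|
    .not (.exists fun _ => .exists fun _ =>
      measurable_const.and <| measurable_const.and <| (hr _ _ _).and (hs _ _ _))

end Measurability

variable [Fintype M] [DecidableEq M] [Fintype W] [DecidableEq W] {ν : Measure Ω}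
  [IsFiniteMeasure ν]

theorem measureReal_womenOptimal_eq_sum (hr : ∀ m w₁ w₂, Measurable fun ω => r ω m w₁ w₂)
    (hs : ∀ w m₁ m₂, Measurable fun ω => s ω w m₁ m₂)
    (hr_order : ∀ᵐ ω ∂ν, ∀ m, IsStrictTotalOrder W (r ω m))
    (hs_order : ∀ᵐ ω ∂ν, ∀ w, IsStrictTotalOrder M (s ω w)) (μ : M ≃ W) :
    ν.real {ω | WomenOptimal (r ω) (s ω) μ} =
      ∑ b : W ≃ M, (-1) ^ Multiset.card (Equiv.Perm.cycleType (μ.trans b)) *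
        ν.real {ω | StablePerm (r ω) (s ω) μ b} := by
  refine measureReal_eq_sum_of_ae_ite_eq_sum (measurable_womenOptimal hr hs μ).setOf
    (fun b => (measurable_stablePerm hr hs μ b).setOf) ?_
  filter_upwards [hr_order, hs_order] with ω _ _
  exact ite_womenOptimal_eq_sum (r ω) (s ω) μ

theorem measureReal_menOptimal_eq_sum (hr : ∀ m w₁ w₂, Measurable fun ω => r ω m w₁ w₂)
    (hs : ∀ w m₁ m₂, Measurable fun ω => s ω w m₁ m₂)
    (hr_order : ∀ᵐ ω ∂ν, ∀ m, IsStrictTotalOrder W (r ω m))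
    (hs_order : ∀ᵐ ω ∂ν, ∀ w, IsStrictTotalOrder M (s ω w)) (μ : M ≃ W) :
    ν.real {ω | MenOptimal (r ω) (s ω) μ} =
      ∑ a : M ≃ W, (-1) ^ Multiset.card (Equiv.Perm.cycleType (a.trans μ.symm)) *
        ν.real {ω | StablePerm (r ω) (s ω) a μ.symm} := by
  simp only [menOptimal_iff_womenOptimal_symm,
    measureReal_womenOptimal_eq_sum hs hr hs_order hr_order μ.symm,
    cycleType_trans_comm μ.symm, stablePerm_comm (r := s _)]

end RandomPreferences

end StableMatching

open StableMatching in
theorem prob_optimal_eq_sum_general {Ω M W : Type*} [MeasurableSpace Ω] [Fintype M] [DecidableEq M]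
    [Fintype W] [DecidableEq W] (ν : Measure Ω) [IsFiniteMeasure ν]
    {r : Ω → M → W → W → Prop} {s : Ω → W → M → M → Prop}
    (hr : ∀ m w₁ w₂, Measurable fun ω => r ω m w₁ w₂)
    (hs : ∀ w m₁ m₂, Measurable fun ω => s ω w m₁ m₂)
    (hr_order : ∀ᵐ ω ∂ν, ∀ m, IsStrictTotalOrder W (r ω m))
    (hs_order : ∀ᵐ ω ∂ν, ∀ w, IsStrictTotalOrder M (s ω w)) (μ : M ≃ W) :
    (ν.real {ω | WomenOptimal (r ω) (s ω) μ} =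
      ∑ b : W ≃ M, (-1) ^ Multiset.card (Equiv.Perm.cycleType (μ.trans b)) *
        ν.real {ω | StablePerm (r ω) (s ω) μ b}) ∧
    (ν.real {ω | MenOptimal (r ω) (s ω) μ} =
      ∑ a : M ≃ W, (-1) ^ Multiset.card (Equiv.Perm.cycleType (a.trans μ.symm)) *
        ν.real {ω | StablePerm (r ω) (s ω) a μ.symm}) :=
  ⟨measureReal_womenOptimal_eq_sum hr hs hr_order hs_order μ,
    measureReal_menOptimal_eq_sum hr hs hr_order hs_order μ⟩

/-- Inclusion–exclusion formulas: the probability that `μ` is stable and women-optimal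
(resp. men-optimal) is the signed sum, over permutations `σ` agreeing with `μ` on `M`
(resp. agreeing with `μ⁻¹` on `W`), of the probability that `σ` is stable. -/
theorem prob_optimal_eq_sum (N : ℕ) (hN : 1 ≤ N) (P : Fin N × Fin N → ℝ)
    (hP : ∀ mw, 0 < P mw) (μ : Fin N ≃ Fin N) :
    ((unifBox N {XY | IsWomenOptimal P XY μ}).toReal =
      ∑ b : Fin N ≃ Fin N, (-1 : ℝ) ^ cyclesGtTwo μ b *
        (unifBox N {XY | IsStablePerm P XY μ b}).toReal) ∧
    ((unifBox N {XY | IsMenOptimal P XY μ}).toReal =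
      ∑ a : Fin N ≃ Fin N, (-1 : ℝ) ^ cyclesGtTwo a μ.symm *
        (unifBox N {XY | IsStablePerm P XY a μ.symm}).toReal) := by
  exact prob_optimal_eq_sum_general (unifBox N)
    (fun m w₁ w₂ => (StableMatching.measurable_prefM P m w₁ w₂).comp measurable_fst)
    (fun w m₁ m₂ => (StableMatching.measurable_prefW P w m₁ m₂).comp measurable_snd)
    (StableMatching.ae_isStrictTotalOrder_prefM fun i => (hP i).ne')
    (StableMatching.ae_isStrictTotalOrder_prefW fun i => (hP i).ne') μ
end

section
/- Restriction to acceptable pairs: fix a complete preference profile and a set E ⊆ M × W such that every man ranks all of his E-partners above all of his non-E-partners, and every woman ranks all of her E-partners above all of her non-E-partners. Consider the incomplete market on E whose incomplete preference profile is the restriction of the complete orders to neighborhoods. Then: (1) for every stable matching μ of the complete market, the partial matching μ ∩ E = {(m, μ m) : (m, μ m) ∈ E} is stable in the incomplete market; (2) the set {μ ∩ E : μ stable in the complete market} equals the set of stable partial matchings of the incomplete market; and (3) if μ is stable and women-optimal (resp. men-optimal) in the complete market, then μ ∩ E is stable and women-optimal (resp. men-optimal) in the incomplete market. -/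
section

variable {N : ℕ}

/-- The matching `μ` of the complete market is stable. -/
def MatchStable (prefM prefW : Fin N → Fin N → Fin N → Prop) (μ : Fin N ≃ Fin N) : Prop :=
  ¬ ∃ m w, prefM m w (μ m) ∧ prefW w m (μ.symm w)

/-- `μ` is women-optimal among stable matchings of the complete market. -/
def MatchWomenOptimal (prefM prefW : Fin N → Fin N → Fin N → Prop)
    (μ : Fin N ≃ Fin N) : Prop :=
  ∀ μ' : Fin N ≃ Fin N, MatchStable prefM prefW μ' →
    ∀ w, μ.symm w = μ'.symm w ∨ prefW w (μ.symm w) (μ'.symm w)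

/-- `μ` is men-optimal among stable matchings of the complete market. -/
def MatchMenOptimal (prefM prefW : Fin N → Fin N → Fin N → Prop)
    (μ : Fin N ≃ Fin N) : Prop :=
  ∀ μ' : Fin N ≃ Fin N, MatchStable prefM prefW μ' →
    ∀ m, μ m = μ' m ∨ prefM m (μ m) (μ' m)

/-- `ν` is a partial matching of the incomplete market on `E`. -/
def IsPartialMatching (E ν : Set (Fin N × Fin N)) : Prop :=
  ν ⊆ E ∧ ∀ e₁ ∈ ν, ∀ e₂ ∈ ν, (e₁.1 = e₂.1 ∨ e₁.2 = e₂.2) → e₁ = e₂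

/-- `(m, w) ∈ E` blocks the partial matching `ν`: `m` is unmatched in `ν` or prefers `w` to
his partner, and `w` is unmatched in `ν` or prefers `m` to her partner. -/
def PBlocks (prefM prefW : Fin N → Fin N → Fin N → Prop) (E ν : Set (Fin N × Fin N))
    (m w : Fin N) : Prop :=
  (m, w) ∈ E ∧ (∀ w', (m, w') ∈ ν → prefM m w w') ∧ (∀ m', (m', w) ∈ ν → prefW w m m')

/-- `ν` is a stable partial matching of the incomplete market on `E` (preferences being the
restrictions of the complete orders to neighborhoods). -/
def PStable (prefM prefW : Fin N → Fin N → Fin N → Prop) (E ν : Set (Fin N × Fin N)) : Prop :=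
  IsPartialMatching E ν ∧ ¬ ∃ m w, PBlocks prefM prefW E ν m w

/-- `ν` is a women-optimal stable partial matching of the incomplete market on `E`. -/
def PWomenOptimal (prefM prefW : Fin N → Fin N → Fin N → Prop)
    (E ν : Set (Fin N × Fin N)) : Prop :=
  ∀ ν', PStable prefM prefW E ν' →
    ∀ m' w, (m', w) ∈ ν' → ∃ m, (m, w) ∈ ν ∧ (m = m' ∨ prefW w m m')

/-- `ν` is a men-optimal stable partial matching of the incomplete market on `E`. -/
def PMenOptimal (prefM prefW : Fin N → Fin N → Fin N → Prop)
    (E ν : Set (Fin N × Fin N)) : Prop :=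
  ∀ ν', PStable prefM prefW E ν' →
    ∀ m w', (m, w') ∈ ν' → ∃ w, (m, w) ∈ ν ∧ (w = w' ∨ prefM m w w')

/-- The restriction `μ ∩ E` of a complete matching `μ` to the acceptable pairs. -/
def restrictE (E : Set (Fin N × Fin N)) (μ : Fin N ≃ Fin N) : Set (Fin N × Fin N) :=
  {p | p ∈ E ∧ μ p.1 = p.2}

/-!
A stable matching of the complete market restricts to a stable matching on `E`, because a pair in
`E` that blocks the restriction also blocks the whole matching: acceptable partners are ranked
above the unacceptable ones that the restriction forgets. Conversely, given a stable `ν` on `E`,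
move the `ν`-partner of every matched agent to the top of the agent's list. A matching that is
stable for the modified lists contains `ν`, since each pair of `ν` consists of mutual favourites.
A pair blocking it for the original lists would either lie in `E` and block `ν`, or lie outside
`E`, hence join two agents unmatched in `ν`, whose lists were not modified. Optimality transfers
along this correspondence because whatever is weakly preferred to an acceptable partner is
acceptable.
-/

section Existence

variable {A B : Type*} {P : A → B → B → Prop} {Q : B → A → A → Prop}

/-- A state of the deferred acceptance algorithm in which the `A`-side proposes: `R a b` records
that `b` has rejected `a`, and `f a` is the current proposal of `a`. The relations `P a` and `Q b`
hold when their first argument is preferred to their second. -/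
structure IsDeferral (P : A → B → B → Prop) (Q : B → A → A → Prop) (R : A → B → Prop)
    (f : A → B) : Prop where
  rejected_of_preferred : ∀ a b, P a b (f a) → R a b
  not_rejected : ∀ a, ¬ R a (f a)
  exists_preferred_of_rejected : ∀ a b, R a b → ∃ a', f a' = b ∧ Q b a' a

theorem exists_update_eq_and_rel [DecidableEq A] [∀ b, IsTrans A (Q b)] [∀ b, Std.Irrefl (Q b)]
    {f : A → B} {x y : A} (hxy : f x = f y) (hQ : Q (f y) x y) (c : B) {a : A} {b : B}
    (h : ∃ a', f a' = b ∧ Q b a' a) : ∃ a', Function.update f y c a' = b ∧ Q b a' a := by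
  have hne : x ≠ y := fun h => irrefl_of (Q (f y)) y (h ▸ hQ)
  obtain ⟨a', rfl, ha'⟩ := h
  rcases eq_or_ne a' y with rfl | hy
  · exact ⟨x, by rw [Function.update_of_ne hne, hxy], trans_of (Q (f a')) hQ ha'⟩
  · exact ⟨a', Function.update_of_ne hy _ _, ha'⟩

theorem IsDeferral.exists_gt_of_collision [∀ b, IsTrans A (Q b)] [∀ b, Std.Irrefl (Q b)]
    (hP : ∀ a, WellFounded (P a)) {R : A → B → Prop} {f : A → B} (hf : IsDeferral P Q R f)
    {x y : A} (hxy : f x = f y) (hQ : Q (f y) x y) {b : B} (hb : b ∉ Set.range f) :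
    ∃ R' > R, ∃ f', IsDeferral P Q R' f' := by
  classical
  let R' : A → B → Prop := fun a c => R a c ∨ a = y ∧ c = f y
  have hRR' : R < R' := by
    refine lt_of_le_not_ge (fun a c => Or.inl) fun h => hf.not_rejected y ?_
    exact h y (f y) (Or.inr ⟨rfl, rfl⟩)
  have hb' : ¬ R' y b := by
    rintro (h | ⟨-, rfl⟩)
    · obtain ⟨a, ha, -⟩ := hf.exists_preferred_of_rejected y b h
      exact hb ⟨a, ha⟩
    · exact hb ⟨y, rfl⟩
  obtain ⟨c, hc, hmin⟩ := (hP y).has_min {c | ¬ R' y c} ⟨b, hb'⟩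
  refine ⟨R', hRR', Function.update f y c, fun a d h => ?_, fun a => ?_, fun a d h => ?_⟩
  · rcases eq_or_ne a y with rfl | ha
    · rw [Function.update_self] at h
      exact not_not.mp fun hd => hmin d hd h
    · rw [Function.update_of_ne ha] at h
      exact Or.inl (hf.rejected_of_preferred a d h)
  · rcases eq_or_ne a y with rfl | ha
    · rwa [Function.update_self]
    · rw [Function.update_of_ne ha]
      exact fun h => h.elim (hf.not_rejected a) fun h => ha h.1
  · apply exists_update_eq_and_rel hxy hQ c
    rcases h with h | ⟨rfl, rfl⟩
    · exact hf.exists_preferred_of_rejected a d h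
    · exact ⟨x, hxy, hQ⟩

theorem exists_injective_isDeferral [Finite A] [∀ b, IsStrictTotalOrder A (Q b)]
    (hP : ∀ a, WellFounded (P a)) (e : A ≃ B) :
    ∃ R f, IsDeferral P Q R f ∧ Function.Injective f := by
  have : Finite B := Finite.of_equiv A e
  have hfav (a : A) : ∃ b, ∀ c, ¬ P a c b := by
    obtain ⟨b, -, hb⟩ := (hP a).has_min Set.univ ⟨e a, trivial⟩
    exact ⟨b, fun c => hb c trivial⟩
  choose f₀ hf₀ using hfav
  have hinit : IsDeferral P Q ⊥ f₀ := ⟨fun a b h => hf₀ a b h, fun _ => id, fun _ _ => False.elim⟩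
  -- Instead of running the algorithm, take a state with a maximal set of rejections.
  obtain ⟨R, ⟨f, hf⟩, hmax⟩ :=
    (Set.toFinite {R | ∃ f, IsDeferral P Q R f}).exists_maximal ⟨⊥, f₀, hinit⟩
  refine ⟨R, f, hf, not_not.mp fun hinj => ?_⟩
  have hsurj : ¬ Function.Surjective f :=
    fun h => hinj ((Finite.injective_iff_surjective_of_equiv e).mpr h)
  obtain ⟨b, hb⟩ := not_forall.mp hsurj
  obtain ⟨x, y, hxy, hQ⟩ : ∃ x y, f x = f y ∧ Q (f y) x y := by
    obtain ⟨x, y, hxy, hne⟩ := Function.not_injective_iff.mp hinj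
    rcases trichotomous_of (Q (f y)) x y with h | h | h
    · exact ⟨x, y, hxy, h⟩
    · exact absurd h hne
    · exact ⟨y, x, hxy.symm, hxy ▸ h⟩
  obtain ⟨R', hR', hf'⟩ := hf.exists_gt_of_collision hP hxy hQ hb
  exact hR'.not_ge (hmax hf' hR'.le)

theorem exists_stable_equiv [Finite A] (hP : ∀ a, WellFounded (P a))
    (hQ : ∀ b, WellFounded (Q b)) (e : A ≃ B) :
    ∃ σ : A ≃ B, ¬ ∃ a b, P a b (σ a) ∧ Q b a (σ.symm b) := by
  -- Refining `Q` to linear orders only makes it harder to be stable.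
  have (b : B) : IsWellFounded A (Q b) := ⟨hQ b⟩
  choose Q' hQQ' hQ' using fun b => IsWellFounded.exists_well_order_ge (Q b)
  obtain ⟨R, f, hf, hinj⟩ := exists_injective_isDeferral (Q := Q') hP e
  have hbij : f.Bijective := ⟨hinj, (Finite.injective_iff_surjective_of_equiv e).mp hinj⟩
  refine ⟨Equiv.ofBijective f hbij, ?_⟩
  rintro ⟨a, b, hPab, hQab⟩
  obtain ⟨a', rfl, ha'⟩ :=
    hf.exists_preferred_of_rejected a b (hf.rejected_of_preferred a b hPab)
  rw [Equiv.ofBijective_symm_apply_apply] at hQab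
  exact asymm_of (Q' (f a')) ha' (hQQ' _ _ _ hQab)

end Existence

section Preferences

variable {α : Type*} {r : α → α → Prop} {s : Set α}

/-- The preference relation obtained from `r`, where `r x y` means that `x` is preferred to `y`, by
moving the elements of `s` to the top as mutually incomparable favourites. It serves to force a
stable matching to contain prescribed pairs. -/
def Promote (s : Set α) (r : α → α → Prop) (x y : α) : Prop :=
  y ∉ s ∧ (x ∈ s ∨ r x y)

theorem wellFounded_promote (s : Set α) (hr : WellFounded r) : WellFounded (Promote s r) := by
  have hs (x : α) (hx : x ∈ s) : Acc (Promote s r) x := ⟨x, fun _ h => absurd hx h.1⟩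
  exact ⟨fun x => hr.induction x fun x ih => ⟨x, fun y h => h.2.elim (hs y) (ih y)⟩⟩

theorem mem_of_eq_or_rel [Std.Asymm r] (hs : ∀ x y, x ∈ s → y ∉ s → r x y) {x y : α}
    (hy : y ∈ s) (hxy : x = y ∨ r x y) : x ∈ s := by
  by_contra hx
  rcases hxy with rfl | hxy
  · exact hx hy
  · exact asymm_of r hxy (hs y x hy hx)

end Preferences

section Restriction

variable {prefM prefW : Fin N → Fin N → Fin N → Prop} {E ν : Set (Fin N × Fin N)}
  {μ : Fin N ≃ Fin N}

theorem isPartialMatching_restrictE (E : Set (Fin N × Fin N)) (μ : Fin N ≃ Fin N) :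
    IsPartialMatching E (restrictE E μ) := by
  refine ⟨fun e he => he.1, ?_⟩
  rintro ⟨m, w⟩ ⟨-, (rfl : μ m = w)⟩ ⟨m', w'⟩ ⟨-, (rfl : μ m' = w')⟩ h
  have hm : m = m' := h.elim id fun h => μ.injective h
  rw [hm]

theorem MatchStable.pStable_restrictE (hμ : MatchStable prefM prefW μ)
    (hEM : ∀ m w w', (m, w) ∈ E → (m, w') ∉ E → prefM m w w')
    (hEW : ∀ w m m', (m, w) ∈ E → (m', w) ∉ E → prefW w m m') :
    PStable prefM prefW E (restrictE E μ) := by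
  refine ⟨isPartialMatching_restrictE E μ, ?_⟩
  rintro ⟨m, w, hE, hm, hw⟩
  refine hμ ⟨m, w, ?_, ?_⟩
  · by_cases h : (m, μ m) ∈ E
    · exact hm (μ m) ⟨h, rfl⟩
    · exact hEM m w (μ m) hE h
  · by_cases h : (μ.symm w, w) ∈ E
    · exact hw (μ.symm w) ⟨h, μ.apply_symm_apply w⟩
    · exact hEW w m (μ.symm w) hE h

theorem IsPartialMatching.exists_stable_promote (hν : IsPartialMatching E ν)
    (hM : ∀ m, WellFounded (prefM m)) (hW : ∀ w, WellFounded (prefW w)) :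
    ∃ μ : Fin N ≃ Fin N,
      MatchStable (fun m => Promote {w | (m, w) ∈ ν} (prefM m))
        (fun w => Promote {m | (m, w) ∈ ν} (prefW w)) μ ∧
      ∀ m w, (m, w) ∈ ν → μ m = w := by
  obtain ⟨μ, hμ⟩ := exists_stable_equiv
    (fun m => wellFounded_promote {w | (m, w) ∈ ν} (hM m))
    (fun w => wellFounded_promote {m | (m, w) ∈ ν} (hW w)) (Equiv.refl (Fin N))
  refine ⟨μ, hμ, fun m w hmw => ?_⟩
  by_contra hne
  refine hμ ⟨m, w, ⟨fun h => hne ?_, Or.inl hmw⟩, ⟨fun h => hne ?_, Or.inl hmw⟩⟩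
  · exact congrArg Prod.snd (hν.2 _ h _ hmw (Or.inl rfl))
  · exact ((Equiv.symm_apply_eq μ).mp (congrArg Prod.fst (hν.2 _ h _ hmw (Or.inr rfl)))).symm

theorem PStable.eq_restrictE (hν : PStable prefM prefW E ν)
    (hνμ : ∀ m w, (m, w) ∈ ν → μ m = w) : ν = restrictE E μ := by
  refine Set.Subset.antisymm (fun e he => ⟨hν.1.1 he, hνμ e.1 e.2 he⟩) ?_
  rintro ⟨m, w⟩ ⟨hE, (rfl : μ m = w)⟩
  by_contra hmem
  refine hν.2 ⟨m, μ m, hE, fun w hw => ?_, fun m' hm' => ?_⟩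
  · exact absurd (hνμ m w hw ▸ hw) hmem
  · exact absurd (μ.injective (hνμ m' (μ m) hm') ▸ hm') hmem

theorem PStable.exists_matchStable (hν : PStable prefM prefW E ν)
    (hM : ∀ m, WellFounded (prefM m)) (hW : ∀ w, WellFounded (prefW w))
    (hEM : ∀ m w w', (m, w) ∈ E → (m, w') ∉ E → prefM m w w')
    (hEW : ∀ w m m', (m, w) ∈ E → (m', w) ∉ E → prefW w m m') :
    ∃ μ : Fin N ≃ Fin N, MatchStable prefM prefW μ ∧ ν = restrictE E μ := by
  obtain ⟨μ, hμ, hνμ⟩ := hν.1.exists_stable_promote hM hW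
  refine ⟨μ, ?_, hν.eq_restrictE hνμ⟩
  rintro ⟨m, w, hm, hw⟩
  by_cases hE : (m, w) ∈ E
  · refine hν.2 ⟨m, w, hE, fun w' h => hνμ m w' h ▸ hm, fun m' h => ?_⟩
    rwa [← (Equiv.symm_apply_eq μ).mpr (hνμ m' w h).symm]
  · have hm' : (m, μ m) ∉ ν := fun h => (hM m).asymmetric _ _ hm (hEM m (μ m) w (hν.1.1 h) hE)
    have hw' : (μ.symm w, w) ∉ ν :=
      fun h => (hW w).asymmetric _ _ hw (hEW w (μ.symm w) m (hν.1.1 h) hE)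
    exact hμ ⟨m, w, ⟨hm', Or.inr hm⟩, ⟨hw', Or.inr hw⟩⟩

theorem MatchWomenOptimal.pWomenOptimal_restrictE (hμ : MatchWomenOptimal prefM prefW μ)
    (hM : ∀ m, WellFounded (prefM m)) (hW : ∀ w, WellFounded (prefW w))
    (hEM : ∀ m w w', (m, w) ∈ E → (m, w') ∉ E → prefM m w w')
    (hEW : ∀ w m m', (m, w) ∈ E → (m', w) ∉ E → prefW w m m') :
    PWomenOptimal prefM prefW E (restrictE E μ) := by
  intro ν' hν' m' w hmem
  obtain ⟨μ', hμ', rfl⟩ := hν'.exists_matchStable hM hW hEM hEW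
  obtain ⟨hE, (rfl : μ' m' = w)⟩ := hmem
  have hpref := hμ μ' hμ' (μ' m')
  rw [μ'.symm_apply_apply] at hpref
  have := (hW (μ' m')).asymm
  exact ⟨_, ⟨mem_of_eq_or_rel (s := {m | (m, μ' m') ∈ E}) (hEW (μ' m')) hE hpref,
    μ.apply_symm_apply _⟩, hpref⟩

theorem MatchMenOptimal.pMenOptimal_restrictE (hμ : MatchMenOptimal prefM prefW μ)
    (hM : ∀ m, WellFounded (prefM m)) (hW : ∀ w, WellFounded (prefW w))
    (hEM : ∀ m w w', (m, w) ∈ E → (m, w') ∉ E → prefM m w w')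
    (hEW : ∀ w m m', (m, w) ∈ E → (m', w) ∉ E → prefW w m m') :
    PMenOptimal prefM prefW E (restrictE E μ) := by
  intro ν' hν' m w' hmem
  obtain ⟨μ', hμ', rfl⟩ := hν'.exists_matchStable hM hW hEM hEW
  obtain ⟨hE, (rfl : μ' m = w')⟩ := hmem
  have hpref := hμ μ' hμ' m
  have := (hM m).asymm
  exact ⟨_, ⟨mem_of_eq_or_rel (s := {w | (m, w) ∈ E}) (hEM m) hE hpref, rfl⟩, hpref⟩

end Restriction

/-- On the finite type `Fin N` well-foundedness is acyclicity, so preferences may be partial. -/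
theorem restriction_to_acceptable_general (prefM prefW : Fin N → Fin N → Fin N → Prop)
    (hM : ∀ m, WellFounded (prefM m)) (hW : ∀ w, WellFounded (prefW w))
    (E : Set (Fin N × Fin N))
    (hEM : ∀ m w w', (m, w) ∈ E → (m, w') ∉ E → prefM m w w')
    (hEW : ∀ w m m', (m, w) ∈ E → (m', w) ∉ E → prefW w m m') :
    (∀ μ : Fin N ≃ Fin N, MatchStable prefM prefW μ →
        PStable prefM prefW E (restrictE E μ)) ∧
    ({ν | ∃ μ : Fin N ≃ Fin N, MatchStable prefM prefW μ ∧ ν = restrictE E μ} =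
        {ν | PStable prefM prefW E ν}) ∧
    (∀ μ : Fin N ≃ Fin N, MatchStable prefM prefW μ → MatchWomenOptimal prefM prefW μ →
        PWomenOptimal prefM prefW E (restrictE E μ)) ∧
    (∀ μ : Fin N ≃ Fin N, MatchStable prefM prefW μ → MatchMenOptimal prefM prefW μ →
        PMenOptimal prefM prefW E (restrictE E μ)) := by
  refine ⟨fun μ hμ => hμ.pStable_restrictE hEM hEW, Set.Subset.antisymm ?_ ?_,
    fun μ _ hopt => hopt.pWomenOptimal_restrictE hM hW hEM hEW,
    fun μ _ hopt => hopt.pMenOptimal_restrictE hM hW hEM hEW⟩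
  · rintro _ ⟨μ, hμ, rfl⟩
    exact hμ.pStable_restrictE hEM hEW
  · exact fun ν hν => hν.exists_matchStable hM hW hEM hEW

/-- Restriction to acceptable pairs.  Suppose every man ranks all his `E`-partners above all
his non-`E`-partners, and symmetrically for women.  Then (1) the restriction `μ ∩ E` of any
stable matching `μ` of the complete market is stable in the incomplete market on `E`;
(2) the stable partial matchings of the incomplete market are exactly the restrictions of
the stable matchings of the complete market; and (3) if `μ` is stable and women-optimal
(resp. men-optimal) in the complete market, then `μ ∩ E` is stable and women-optimal
(resp. men-optimal) in the incomplete market. -/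
theorem restriction_to_acceptable (hN : 1 ≤ N)
    (prefM prefW : Fin N → Fin N → Fin N → Prop)
    (hM : ∀ m, IsStrictTotalOrder (Fin N) (prefM m))
    (hW : ∀ w, IsStrictTotalOrder (Fin N) (prefW w))
    (E : Set (Fin N × Fin N))
    (hEM : ∀ m w w', (m, w) ∈ E → (m, w') ∉ E → prefM m w w')
    (hEW : ∀ w m m', (m, w) ∈ E → (m', w) ∉ E → prefW w m m') :
    (∀ μ : Fin N ≃ Fin N, MatchStable prefM prefW μ →
        PStable prefM prefW E (restrictE E μ)) ∧
    ({ν | ∃ μ : Fin N ≃ Fin N, MatchStable prefM prefW μ ∧ ν = restrictE E μ} =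
        {ν | PStable prefM prefW E ν}) ∧
    (∀ μ : Fin N ≃ Fin N, MatchStable prefM prefW μ → MatchWomenOptimal prefM prefW μ →
        PWomenOptimal prefM prefW E (restrictE E μ)) ∧
    (∀ μ : Fin N ≃ Fin N, MatchStable prefM prefW μ → MatchMenOptimal prefM prefW μ →
        PMenOptimal prefM prefW E (restrictE E μ)) := by
  exact restriction_to_acceptable_general prefM prefW
    (fun _ => Finite.wellFounded_of_trans_of_irrefl _)
    (fun _ => Finite.wellFounded_of_trans_of_irrefl _) E hEM hEW

end
end

section
/- Rotation elimination: fix a complete preference profile, a stable matching μ₁, and a rotation r that is exposed and women-improving in μ₁. Let μ₂ be the matching obtained by eliminating r: μ₂(m) = r⁻¹(m) for men m in r and μ₂(m) = μ₁(m) otherwise. Then μ₂ is a stable matching, every woman weakly prefers μ₂ to μ₁ and every man weakly prefers μ₁ to μ₂ (with strict preference exactly for the agents in r). Moreover, if two distinct rotations r₁ ≠ r₂ are both exposed and women-improving in the same stable matching μ₁, then r₁ and r₂ involve disjoint sets of people. -/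
section

variable {N : ℕ}

/-- `w` belongs to the set of women `m` could improve with: `μ m ≻ₘ w` and `m ≻_w μ⁻¹ w`. -/
def InS (prefM prefW : Fin N → Fin N → Fin N → Prop) (μ : Fin N ≃ Fin N)
    (m w : Fin N) : Prop :=
  prefM m (μ m) w ∧ prefW w m (μ.symm w)

/-- A rotation, encoded as a simple directed cycle
`m₀ → w₀ → m₁ → w₁ → ⋯ → m_{k+1} → w_{k+1} → m₀` alternating men and women, of length
`2(k+2) ≥ 4`: the men `mi` and women `wi` are pairwise distinct, the successor of the man
`mi i` is the woman `wi i` and the successor of the woman `wi i` is the man `mi (i+1)`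
(indices mod `k+2`), so the predecessor of `mi i` is `wi (i-1)`.
It is exposed and women-improving in the stable matching `μ` if for every man `mi i` of the
cycle his successor `wi i` is `μ (mi i)` and his predecessor `wi (i-1)` is his most
preferred woman among the women `w` with `μ (mi i) ≻_{mi i} w` and `mi i ≻_w μ⁻¹ w`. -/
def ExposedWomenImproving (prefM prefW : Fin N → Fin N → Fin N → Prop)
    (μ : Fin N ≃ Fin N) {k : ℕ} (mi wi : Fin (k + 2) → Fin N) : Prop :=
  Function.Injective mi ∧ Function.Injective wi ∧
    ∀ i, wi i = μ (mi i) ∧ InS prefM prefW μ (mi i) (wi (i - 1)) ∧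
      ∀ w', InS prefM prefW μ (mi i) w' →
        wi (i - 1) = w' ∨ prefM (mi i) (wi (i - 1)) w'

/-! The woman to whom a man of a rotation moves is determined by the matching alone, so two exposed
rotations that meet agree one step back along the cycle, hence all the way around.

Eliminating a rotation permutes the partners of its women, each of whom gains. A pair `(m, w)`
blocking the new matching therefore has `w` prefer `m` to her old partner as well. Stability of
the old matching makes `w` an improving woman for `m`, but a man of the rotation now has his
favourite among these, and any other man kept a partner he prefers to all of them. -/

section Rotations

variable {M W : Type*} {prefM : M → W → W → Prop} {prefW : W → M → M → Prop} {μ e : M ≃ W}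
  {n n' : ℕ} [NeZero n] [NeZero n'] {mi : Fin n → M} {wi : Fin n → W}
  {mi' : Fin n' → M} {wi' : Fin n' → W} {m : M} {w w' : W}

/-- Stability of a matching, for arbitrary types of men and women. -/
def IsStableMatching (prefM : M → W → W → Prop) (prefW : W → M → M → Prop) (μ : M ≃ W) : Prop :=
  ¬ ∃ m w, prefM m w (μ m) ∧ prefW w m (μ.symm w)

/-- A woman-improving pair `(m, w)`: she prefers him to her partner in `μ`, while he prefers his
partner to her. This is `InS` for arbitrary types of men and women. -/
def IsImprovingPair (prefM : M → W → W → Prop) (prefW : W → M → M → Prop) (μ : M ≃ W)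
    (m : M) (w : W) : Prop :=
  prefM m (μ m) w ∧ prefW w m (μ.symm w)

/-- `w` is the favourite of `m` among the women forming an improving pair with him, that is, the
next woman to whom `m` would move in a rotation. -/
def IsBestImprovingPair (prefM : M → W → W → Prop) (prefW : W → M → M → Prop) (μ : M ≃ W)
    (m : M) (w : W) : Prop :=
  IsImprovingPair prefM prefW μ m w ∧
    ∀ w', IsImprovingPair prefM prefW μ m w' → w = w' ∨ prefM m w w'

/-- A rotation exposed and women-improving in `μ`, for arbitrary types of men and women. As in
`ExposedWomenImproving` it is the cycle `⋯ → mi i → wi i → mi (i + 1) → ⋯`, indices mod `n`. -/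
def IsExposedRotation (prefM : M → W → W → Prop) (prefW : W → M → M → Prop) (μ : M ≃ W)
    (mi : Fin n → M) (wi : Fin n → W) : Prop :=
  Function.Injective mi ∧ Function.Injective wi ∧
    ∀ i, wi i = μ (mi i) ∧ IsBestImprovingPair prefM prefW μ (mi i) (wi (i - 1))

/-- `e` is obtained from `μ` by eliminating the rotation `(mi, wi)`: every man of the rotation is
matched to his predecessor in the cycle, and the other men keep their partners. -/
def IsElimination (μ : M ≃ W) (mi : Fin n → M) (wi : Fin n → W) (e : M ≃ W) : Prop :=
  (∀ i, e (mi i) = wi (i - 1)) ∧ ∀ m, (∀ i, mi i ≠ m) → e m = μ m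

theorem IsStableMatching.isImprovingPair_of_prefW [Std.Trichotomous (prefM m)]
    [Std.Irrefl (prefW w)] (hμ : IsStableMatching prefM prefW μ) (hw : prefW w m (μ.symm w)) :
    IsImprovingPair prefM prefW μ m w := by
  refine ⟨?_, hw⟩
  rcases trichotomous_of (prefM m) (μ m) w with h | h | h
  · exact h
  · rw [← h, Equiv.symm_apply_apply, h] at hw
    exact absurd hw (irrefl m)
  · exact absurd ⟨m, w, h, hw⟩ hμ

theorem IsBestImprovingPair.unique [Std.Asymm (prefM m)]
    (hw : IsBestImprovingPair prefM prefW μ m w) (hw' : IsBestImprovingPair prefM prefW μ m w') :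
    w = w' := by
  rcases hw.2 w' hw'.1 with h | h
  · exact h
  rcases hw'.2 w hw.1 with h' | h'
  · exact h'.symm
  · exact absurd h' (asymm h)

theorem exists_isElimination (hmi : Function.Injective mi) (hwi : ∀ i, wi i = μ (mi i)) :
    ∃ e, IsElimination μ mi wi e := by
  let rotate : Equiv.Perm M := Equiv.Perm.viaEmbedding (Equiv.subRight (1 : Fin n)) ⟨mi, hmi⟩
  refine ⟨rotate.trans μ, fun i => ?_, fun m hm => ?_⟩
  · rw [hwi, Equiv.trans_apply]
    exact congrArg μ (Equiv.Perm.viaEmbedding_apply _ ⟨mi, hmi⟩ i)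
  · exact congrArg μ (Equiv.Perm.viaEmbedding_apply_of_notMem _ ⟨mi, hmi⟩ m fun ⟨i, hi⟩ => hm i hi)

namespace IsElimination

theorem symm_apply_women (he : IsElimination μ mi wi e) (i : Fin n) :
    e.symm (wi i) = mi (i + 1) := by
  rw [Equiv.symm_apply_eq, he.1, add_sub_cancel_right]

theorem symm_apply_of_ne (he : IsElimination μ mi wi e) (hwi : ∀ i, wi i = μ (mi i))
    (hw : ∀ i, wi i ≠ w) : e.symm w = μ.symm w := by
  rw [Equiv.symm_apply_eq, he.2, Equiv.apply_symm_apply]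
  intro i hi
  exact hw i (by rw [hwi, hi, Equiv.apply_symm_apply])

theorem prefM_men (he : IsElimination μ mi wi e) (hr : IsExposedRotation prefM prefW μ mi wi)
    (i : Fin n) : prefM (mi i) (μ (mi i)) (e (mi i)) := by
  rw [he.1]
  exact (hr.2.2 i).2.1.1

theorem prefW_women (he : IsElimination μ mi wi e) (hr : IsExposedRotation prefM prefW μ mi wi)
    (i : Fin n) : prefW (wi i) (e.symm (wi i)) (μ.symm (wi i)) := by
  have improving : IsImprovingPair prefM prefW μ (mi (i + 1)) (wi (i + 1 - 1)) :=
    (hr.2.2 (i + 1)).2.1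
  rw [add_sub_cancel_right] at improving
  rw [he.symm_apply_women]
  exact improving.2

theorem prefW_of_prefW_symm_apply [IsTrans M (prefW w)] (he : IsElimination μ mi wi e)
    (hr : IsExposedRotation prefM prefW μ mi wi) (hw : prefW w m (e.symm w)) :
    prefW w m (μ.symm w) := by
  by_cases hmem : ∃ i, wi i = w
  · obtain ⟨i, rfl⟩ := hmem
    exact trans_of (prefW (wi i)) hw (he.prefW_women hr i)
  · rwa [← he.symm_apply_of_ne (fun i => (hr.2.2 i).1) (not_exists.mp hmem)]

theorem not_prefM_of_isImprovingPair [Std.Asymm (prefM m)] (he : IsElimination μ mi wi e)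
    (hr : IsExposedRotation prefM prefW μ mi wi) (hmw : IsImprovingPair prefM prefW μ m w) :
    ¬ prefM m w (e m) := by
  by_cases hmem : ∃ i, mi i = m
  · obtain ⟨i, rfl⟩ := hmem
    rw [he.1]
    rcases (hr.2.2 i).2.2 w hmw with h | h
    · exact h ▸ irrefl (r := prefM (mi i)) (wi (i - 1))
    · exact asymm h
  · rw [he.2 m (not_exists.mp hmem)]
    exact asymm hmw.1

theorem isStableMatching [∀ m, IsStrictTotalOrder W (prefM m)] [∀ w, IsStrictOrder M (prefW w)]
    (he : IsElimination μ mi wi e) (hμ : IsStableMatching prefM prefW μ)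
    (hr : IsExposedRotation prefM prefW μ mi wi) : IsStableMatching prefM prefW e := by
  rintro ⟨m, w, hm, hw⟩
  have improving : IsImprovingPair prefM prefW μ m w :=
    hμ.isImprovingPair_of_prefW (he.prefW_of_prefW_symm_apply hr hw)
  exact he.not_prefM_of_isImprovingPair hr improving hm

end IsElimination

open scoped Fin.CommRing in
theorem fin_forall_of_sub_one {p : Fin n → Prop} {i : Fin n} (hi : p i)
    (hp : ∀ j, p j → p (j - 1)) (a : Fin n) : p a := by
  have descend : ∀ k : ℕ, p (i - k) := by
    intro k
    induction k with
    | zero => simpa using hi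
    | succ k ih => simpa [sub_sub] using hp _ ih
  simpa using descend (i - a).val

namespace IsExposedRotation

theorem range_women (hr : IsExposedRotation prefM prefW μ mi wi) :
    Set.range wi = μ '' Set.range mi := by
  rw [← Set.range_comp]
  exact congrArg Set.range (funext fun i => (hr.2.2 i).1)

theorem women_eq_iff (hr : IsExposedRotation prefM prefW μ mi wi)
    (hr' : IsExposedRotation prefM prefW μ mi' wi') {i : Fin n} {j : Fin n'} :
    wi i = wi' j ↔ mi i = mi' j := by
  rw [(hr.2.2 i).1, (hr'.2.2 j).1, μ.injective.eq_iff]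

variable [∀ m, Std.Asymm (prefM m)]

theorem men_sub_one_eq (hr : IsExposedRotation prefM prefW μ mi wi)
    (hr' : IsExposedRotation prefM prefW μ mi' wi') {i : Fin n} {j : Fin n'}
    (hij : mi i = mi' j) : mi (i - 1) = mi' (j - 1) := by
  have best' : IsBestImprovingPair prefM prefW μ (mi i) (wi' (j - 1)) :=
    hij ▸ (hr'.2.2 j).2
  exact (hr.women_eq_iff hr').mp ((hr.2.2 i).2.unique best')

theorem range_men_subset (hr : IsExposedRotation prefM prefW μ mi wi)
    (hr' : IsExposedRotation prefM prefW μ mi' wi') {i : Fin n} {j : Fin n'}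
    (hij : mi i = mi' j) : Set.range mi ⊆ Set.range mi' := by
  refine Set.range_subset_iff.mpr (fin_forall_of_sub_one (i := i) ⟨j, hij.symm⟩ ?_)
  rintro a ⟨b, hba⟩
  exact ⟨b - 1, (hr.men_sub_one_eq hr' hba.symm).symm⟩

theorem range_men_eq (hr : IsExposedRotation prefM prefW μ mi wi)
    (hr' : IsExposedRotation prefM prefW μ mi' wi') {i : Fin n} {j : Fin n'}
    (hij : mi i = mi' j) : Set.range mi = Set.range mi' :=
  (hr.range_men_subset hr' hij).antisymm (hr'.range_men_subset hr hij.symm)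

theorem men_add_one_eq (hr : IsExposedRotation prefM prefW μ mi wi)
    (hr' : IsExposedRotation prefM prefW μ mi' wi') {i : Fin n} {j : Fin n'}
    (hij : mi i = mi' j) : mi (i + 1) = mi' (j + 1) := by
  obtain ⟨b, hb⟩ : mi (i + 1) ∈ Set.range mi' := hr.range_men_subset hr' hij ⟨i + 1, rfl⟩
  have hpred : mi i = mi' (b - 1) := by
    simpa only [add_sub_cancel_right] using hr.men_sub_one_eq hr' hb.symm
  have hbj : b - 1 = j := hr'.1 (hpred.symm.trans hij)
  rw [← hb, ← hbj, sub_add_cancel]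

end IsExposedRotation

theorem rotation_elimination_general
    [∀ m, IsStrictTotalOrder W (prefM m)] [∀ w, IsStrictOrder M (prefW w)]
    (hμ : IsStableMatching prefM prefW μ) (hr : IsExposedRotation prefM prefW μ mi wi) :
    (∃ e, IsElimination μ mi wi e) ∧
    (∀ e, IsElimination μ mi wi e →
      IsStableMatching prefM prefW e ∧
      (∀ w, (∃ i, wi i = w) → prefW w (e.symm w) (μ.symm w)) ∧
      (∀ w, (∀ i, wi i ≠ w) → e.symm w = μ.symm w) ∧
      (∀ m, (∃ i, mi i = m) → prefM m (μ m) (e m))) ∧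
    (∀ (n' : ℕ) [NeZero n'] (mi' : Fin n' → M) (wi' : Fin n' → W),
      IsExposedRotation prefM prefW μ mi' wi' →
      ((∃ i j, mi i = mi' j) ∨ (∃ i j, wi i = wi' j)) →
        (Set.range mi = Set.range mi' ∧ Set.range wi = Set.range wi' ∧
          (∀ i j, mi i = mi' j → wi i = wi' j) ∧
          (∀ i j, wi i = wi' j → mi (i + 1) = mi' (j + 1)))) := by
  have hwi : ∀ i, wi i = μ (mi i) := fun i => (hr.2.2 i).1
  refine ⟨exists_isElimination hr.1 hwi, fun e he => ⟨he.isStableMatching hμ hr, ?_,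
    fun w => he.symm_apply_of_ne hwi, ?_⟩, fun n' _ mi' wi' hr' hshare => ?_⟩
  · rintro _ ⟨i, rfl⟩
    exact he.prefW_women hr i
  · rintro _ ⟨i, rfl⟩
    exact he.prefM_men hr i
  · obtain ⟨i, j, hij⟩ : ∃ i j, mi i = mi' j := by
      simpa only [hr.women_eq_iff hr', or_self] using hshare
    have hrange : Set.range mi = Set.range mi' := hr.range_men_eq hr' hij
    exact ⟨hrange, by rw [hr.range_women, hr'.range_women, hrange],
      fun i j => (hr.women_eq_iff hr').mpr,
      fun i j h => hr.men_add_one_eq hr' ((hr.women_eq_iff hr').mp h)⟩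

end Rotations

/-- Rotation elimination: eliminating a rotation `r` (given by `mi`, `wi`) that is exposed
and women-improving in a stable matching `μ₁` — i.e. replacing `μ₁ (mi i) = wi i` by
`wi (i-1)` and keeping all other couples — yields a well-defined matching `e` (a bijection),
which is stable; every woman weakly prefers `e` to `μ₁` and every man weakly prefers `μ₁`
to `e`, strictly exactly for the agents of `r`.  Moreover two rotations exposed and
women-improving in the same stable matching `μ₁` that share a person coincide (distinct
such rotations involve disjoint sets of people). -/
theorem rotation_elimination (hN : 1 ≤ N)
    (prefM prefW : Fin N → Fin N → Fin N → Prop)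
    (hM : ∀ m, IsStrictTotalOrder (Fin N) (prefM m))
    (hW : ∀ w, IsStrictTotalOrder (Fin N) (prefW w))
    (μ₁ : Fin N ≃ Fin N) (hμ₁ : MatchStable prefM prefW μ₁)
    (k : ℕ) (mi wi : Fin (k + 2) → Fin N)
    (hr : ExposedWomenImproving prefM prefW μ₁ mi wi) :
    (∃ e : Fin N ≃ Fin N,
      (∀ i, e (mi i) = wi (i - 1)) ∧ ∀ m, (∀ i, mi i ≠ m) → e m = μ₁ m) ∧
    (∀ e : Fin N ≃ Fin N,
      (∀ i, e (mi i) = wi (i - 1)) → (∀ m, (∀ i, mi i ≠ m) → e m = μ₁ m) →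
        MatchStable prefM prefW e ∧
        (∀ w, (∃ i, wi i = w) → prefW w (e.symm w) (μ₁.symm w)) ∧
        (∀ w, (∀ i, wi i ≠ w) → e.symm w = μ₁.symm w) ∧
        (∀ m, (∃ i, mi i = m) → prefM m (μ₁ m) (e m))) ∧
    (∀ (k' : ℕ) (mi' wi' : Fin (k' + 2) → Fin N),
      ExposedWomenImproving prefM prefW μ₁ mi' wi' →
        ((∃ i j, mi i = mi' j) ∨ (∃ i j, wi i = wi' j)) →
          (Set.range mi = Set.range mi' ∧ Set.range wi = Set.range wi' ∧
            (∀ i j, mi i = mi' j → wi i = wi' j) ∧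
            (∀ i j, wi i = wi' j → mi (i + 1) = mi' (j + 1)))) := by
  obtain ⟨hexists, helim, hshare⟩ := rotation_elimination_general hμ₁ hr
  exact ⟨hexists, fun e h₁ h₂ => helim e ⟨h₁, h₂⟩, fun k' => hshare (k' + 2)⟩

end
end
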